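/- arXiv:2205.04574 — 4 statements merged into one kernel-verified Lean document; each statement's English description precedes it below -/
import Mathlib

section
/- Let n ≥ 1 and 1 ≤ p < ∞, and set C_p = ∫_{ℝⁿ} (4π)^{-n/2} e^{-‖z‖²/4} ‖z‖^p dz. Then for every smooth compactly supported f : ℝⁿ → ℝ and every t > 0 one has t^{-p/2} ∫_{ℝⁿ} ∫_{ℝⁿ} p_t(x,y) |f(y) − f(x)|^p dy dx ≤ C_p ∫_{ℝⁿ} ‖∇f(x)‖^p dx. -/
open Real MeasureTheory

theorem hdq_pointwise {n : ℕ} {p : ℝ} (hp : 1 ≤ p)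
    {f : EuclideanSpace ℝ (Fin n) → ℝ} (hf : ContDiff ℝ (⊤ : ℕ∞) f)
    (x w : EuclideanSpace ℝ (Fin n)) :
    ENNReal.ofReal (|f (x + w) - f x| ^ p) ≤
      ∫⁻ s in Set.Ioc (0:ℝ) 1, ENNReal.ofReal (‖w‖ ^ p * ‖fderiv ℝ f (x + s • w)‖ ^ p) := by
  have hc : Continuous (fderiv ℝ f) := hf.continuous_fderiv (by simp)
  have hp0 : 0 ≤ p := by linarith
  have hd : Differentiable ℝ f := hf.differentiable (by simp)
  have hc2 : Continuous fun s : ℝ => fderiv ℝ f (x + s • w) := hc.comp (by fun_prop)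
  have hc3 : Continuous fun s : ℝ => fderiv ℝ f (x + s • w) w := hc2.clm_apply continuous_const
  have ftc : ∫ s in (0:ℝ)..1, fderiv ℝ f (x + s • w) w = f (x + w) - f x := by
    have := intervalIntegral.integral_eq_sub_of_hasDerivAt (a := (0:ℝ)) (b := 1)
      (f := fun s : ℝ => f (x + s • w)) (f' := fun s => fderiv ℝ f (x + s • w) w) ?_
      (hc3.intervalIntegrable _ _)
    · simpa using this
    · intro s _
      have h1 : HasDerivAt (fun s : ℝ => x + s • w) w s := by
        simpa using ((hasDerivAt_id s).smul_const w).const_add x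
      exact (hd (x + s • w)).hasFDerivAt.comp_hasDerivAt s h1
  have hcg : Continuous fun s : ℝ => ‖w‖ * ‖fderiv ℝ f (x + s • w)‖ :=
    continuous_const.mul hc2.norm
  have hcgp : Continuous fun s : ℝ => (‖w‖ * ‖fderiv ℝ f (x + s • w)‖) ^ p :=
    hcg.rpow_const (fun _ => Or.inr hp0)
  have hi1 := (hcg.intervalIntegrable (μ := volume) 0 1).1
  have hi2 := (hcgp.intervalIntegrable (μ := volume) 0 1).1
  have le1 : |f (x + w) - f x| ≤ ∫ s in Set.Ioc (0:ℝ) 1, ‖w‖ * ‖fderiv ℝ f (x + s • w)‖ := by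
    rw [← ftc, ← Real.norm_eq_abs, intervalIntegral.integral_of_le zero_le_one]
    refine norm_integral_le_of_norm_le hi1 (Filter.Eventually.of_forall fun s => ?_)
    rw [mul_comm]
    exact ContinuousLinearMap.le_opNorm _ _
  haveI : IsProbabilityMeasure (volume.restrict (Set.Ioc (0:ℝ) 1)) := ⟨by simp⟩
  have jensen := (convexOn_rpow hp).map_integral_le
    (μ := volume.restrict (Set.Ioc (0:ℝ) 1)) (f := fun s => ‖w‖ * ‖fderiv ℝ f (x + s • w)‖)
    (Real.continuous_rpow_const hp0).continuousOn isClosed_Ici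
    (Filter.Eventually.of_forall fun s => Set.mem_Ici.2 (by positivity)) hi1 hi2
  have e : ∀ s : ℝ, ‖w‖ ^ p * ‖fderiv ℝ f (x + s • w)‖ ^ p
      = (‖w‖ * ‖fderiv ℝ f (x + s • w)‖) ^ p := fun s =>
    (Real.mul_rpow (norm_nonneg _) (norm_nonneg _)).symm
  simp_rw [e]
  rw [← ofReal_integral_eq_lintegral_ofReal hi2
    (Filter.Eventually.of_forall fun s => by positivity)]
  refine ENNReal.ofReal_le_ofReal (le_trans ?_ jensen)
  exact Real.rpow_le_rpow (abs_nonneg _) le1 hp0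

theorem hdq_translate {n : ℕ} {p : ℝ} (hp : 1 ≤ p)
    {f : EuclideanSpace ℝ (Fin n) → ℝ} (hf : ContDiff ℝ (⊤ : ℕ∞) f)
    (w : EuclideanSpace ℝ (Fin n)) :
    ∫⁻ x, ENNReal.ofReal (|f (x + w) - f x| ^ p) ≤
      ENNReal.ofReal (‖w‖ ^ p) * ∫⁻ x, ENNReal.ofReal (‖fderiv ℝ f x‖ ^ p) := by
  have hp0 : 0 ≤ p := by linarith
  have hc : Continuous (fderiv ℝ f) := hf.continuous_fderiv (by simp)
  refine (lintegral_mono fun x => hdq_pointwise hp hf x w).trans ?_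
  rw [lintegral_lintegral_swap]
  · have : ∀ s : ℝ, ∫⁻ x, ENNReal.ofReal (‖w‖ ^ p * ‖fderiv ℝ f (x + s • w)‖ ^ p)
        = ENNReal.ofReal (‖w‖ ^ p) * ∫⁻ x, ENNReal.ofReal (‖fderiv ℝ f x‖ ^ p) := by
      intro s
      rw [lintegral_add_right_eq_self
        (fun x => ENNReal.ofReal (‖w‖ ^ p * ‖fderiv ℝ f x‖ ^ p)) (s • w)]
      rw [← lintegral_const_mul' _ _ ENNReal.ofReal_ne_top]
      exact lintegral_congr fun x => ENNReal.ofReal_mul (by positivity)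
    simp [this]
  · refine Measurable.aemeasurable (Continuous.measurable ?_)
    refine ENNReal.continuous_ofReal.comp (continuous_const.mul ?_)
    exact (hc.comp (by fun_prop)).norm.rpow_const (fun _ => Or.inr hp0)

theorem hdq_integrable {n : ℕ} {p : ℝ} (hp : 1 ≤ p) :
    Integrable fun z : EuclideanSpace ℝ (Fin n) =>
      (4 * π) ^ (-(n : ℝ) / 2) * Real.exp (-‖z‖ ^ 2 / 4) * ‖z‖ ^ p := by
  have hp0 : 0 ≤ p := by linarith
  have h1 : Integrable fun z : EuclideanSpace ℝ (Fin n) => Real.exp (-(1/8) * ‖z‖ ^ 2) := by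
    have := (GaussianFourier.integrable_cexp_neg_mul_sq_norm_add (V := EuclideanSpace ℝ (Fin n))
      (b := 1/8) (by norm_num) 0 0).re
    refine this.congr (Filter.Eventually.of_forall fun z => ?_)
    simp only [zero_mul, add_zero]
    have : (-(1/8) * (‖z‖:ℂ)^2) = ((-(1/8) * ‖z‖^2 : ℝ) : ℂ) := by push_cast; ring
    rw [this]
    exact Complex.exp_ofReal_re _
  obtain ⟨C, hC⟩ : ∃ C, ∀ r : ℝ, 0 ≤ r → r ^ p ≤ C * Real.exp (1/8 * r ^ 2) := by
    obtain ⟨N, hN⟩ := exists_nat_ge p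
    refine ⟨1 + N.factorial * 8 ^ N, fun r hr => ?_⟩
    have hexp1 : 1 ≤ Real.exp (1/8 * r ^ 2) := Real.one_le_exp (by positivity)
    rcases le_total r 1 with h | h
    · have : r ^ p ≤ 1 := Real.rpow_le_one hr h hp0
      have h2 : (0:ℝ) ≤ N.factorial * 8 ^ N := by positivity
      nlinarith
    · have a1 : r ^ p ≤ r ^ (2 * N) := by
        rw [← Real.rpow_natCast]
        refine Real.rpow_le_rpow_of_exponent_le h ?_
        push_cast; nlinarith [hN]
      have a2 := Real.pow_div_factorial_le_exp (1/8 * r^2) (by positivity) N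
      have hf : (0:ℝ) < N.factorial := by positivity
      rw [div_le_iff₀ hf, mul_pow, ← pow_mul] at a2
      have a3 : r ^ (2*N) = 8 ^ N * ((1/8)^N * r ^ (2*N)) := by
        rw [← mul_assoc, ← mul_pow]; norm_num
      have h8 : (0:ℝ) < 8 ^ N := by positivity
      have a4 := mul_le_mul_of_nonneg_left a2 h8.le
      nlinarith [Real.exp_pos (1/8 * r ^ 2)]
  refine (h1.const_mul ((4 * π) ^ (-(n : ℝ) / 2) * C)).mono' ?_ ?_
  · refine Continuous.aestronglyMeasurable ?_
    exact (by fun_prop : Continuous fun z : EuclideanSpace ℝ (Fin n) =>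
      (4 * π) ^ (-(n : ℝ) / 2) * Real.exp (-‖z‖ ^ 2 / 4)).mul
        (continuous_norm.rpow_const (fun _ => Or.inr hp0))
  · refine Filter.Eventually.of_forall fun z => ?_
    rw [Real.norm_of_nonneg (by positivity), mul_assoc, mul_assoc]
    refine mul_le_mul_of_nonneg_left ?_ (by positivity)
    calc _ ≤ Real.exp (-‖z‖ ^ 2 / 4) * (C * Real.exp (1/8 * ‖z‖ ^ 2)) := by
          gcongr; exact hC _ (norm_nonneg _)
      _ = C * Real.exp (-(1/8) * ‖z‖ ^ 2) := by
          rw [mul_left_comm, ← Real.exp_add]; ring_nf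

theorem heat_difference_quotient_bound (n : ℕ) (hn : 1 ≤ n) (p : ℝ) (hp : 1 ≤ p)
    (f : EuclideanSpace ℝ (Fin n) → ℝ) (hf : ContDiff ℝ (⊤ : ℕ∞) f)
    (hsupp : HasCompactSupport f) (t : ℝ) (ht : 0 < t) :
    t ^ (-(p / 2)) *
      ∫ x, ∫ y,
        (4 * π * t) ^ (-(n : ℝ) / 2) * Real.exp (-‖x - y‖ ^ 2 / (4 * t)) * |f y - f x| ^ p
      ≤ (∫ z : EuclideanSpace ℝ (Fin n),
            (4 * π) ^ (-(n : ℝ) / 2) * Real.exp (-‖z‖ ^ 2 / 4) * ‖z‖ ^ p) *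
          ∫ x, ‖fderiv ℝ f x‖ ^ p := by
  have hp0 : 0 ≤ p := by linarith
  have hc : Continuous (fderiv ℝ f) := hf.continuous_fderiv (by simp)
  have hfc : Continuous f := hf.continuous
  have hDint : Integrable fun x => ‖fderiv ℝ f x‖ ^ p := by
    refine Continuous.integrable_of_hasCompactSupport
      (hc.norm.rpow_const (fun _ => Or.inr hp0)) ?_
    exact (hsupp.fderiv (𝕜 := ℝ)).comp_left (g := fun L => ‖L‖ ^ p)
      (by simp only [norm_zero]; exact Real.zero_rpow (by linarith))
  set k : EuclideanSpace ℝ (Fin n) → ℝ := fun z =>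
    (4 * π) ^ (-(n : ℝ) / 2) * Real.exp (-‖z‖ ^ 2 / 4) * ‖z‖ ^ p with hk
  have hkint : Integrable k := hdq_integrable hp
  set K : EuclideanSpace ℝ (Fin n) → ℝ := fun w =>
    (4 * π * t) ^ (-(n : ℝ) / 2) * Real.exp (-‖w‖ ^ 2 / (4 * t)) with hK
  have hKc : Continuous K := by rw [hK]; fun_prop
  have hK0 : ∀ w, 0 ≤ K w := fun w => by rw [hK]; positivity
  have hst : 0 < √t := Real.sqrt_pos.2 ht
  -- scaling
  have hscale : ∀ w, K w * ‖w‖ ^ p = t ^ (-(n:ℝ)/2) * t ^ (p/2) * k ((√t)⁻¹ • w) := by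
    intro w
    simp only [hK, hk]
    rw [norm_smul, Real.norm_of_nonneg (inv_nonneg.2 hst.le), mul_pow, inv_pow, Real.sq_sqrt ht.le,
      Real.mul_rpow (by positivity) (norm_nonneg _), Real.inv_rpow hst.le,
      Real.mul_rpow (by positivity) ht.le, Real.sqrt_eq_rpow, ← Real.rpow_mul ht.le]
    have e1 : (1/2 * p) = p / 2 := by ring
    have e2 : -‖w‖ ^ 2 / (4 * t) = -(t⁻¹ * ‖w‖ ^ 2) / 4 := by field_simp
    have : t ^ (p/2) ≠ 0 := (Real.rpow_pos_of_pos ht _).ne'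
    rw [e1, e2]
    field_simp
  have hKint : Integrable fun w => K w * ‖w‖ ^ p := by
    simp_rw [hscale]
    exact (hkint.comp_smul (inv_ne_zero hst.ne')).const_mul _
  have hKval : ∫ w, K w * ‖w‖ ^ p = t ^ (p/2) * ∫ z, k z := by
    simp_rw [hscale]
    rw [integral_const_mul, Measure.integral_comp_smul, finrank_euclideanSpace_fin, inv_pow,
      inv_inv, abs_of_pos (by positivity), smul_eq_mul]
    have : t ^ (-(n:ℝ)/2) * √t ^ n = 1 := by
      rw [Real.sqrt_eq_rpow, ← Real.rpow_natCast, ← Real.rpow_mul ht.le, ← Real.rpow_add ht]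
      ring_nf; simp
    calc _ = (t ^ (-(n:ℝ)/2) * √t ^ n) * (t ^ (p/2) * ∫ z, k z) := by ring
      _ = _ := by rw [this, one_mul]
  have main : ENNReal.ofReal (∫ x, ∫ y, K (x - y) * |f y - f x| ^ p) ≤
      ENNReal.ofReal ((∫ w, K w * ‖w‖ ^ p) * ∫ x, ‖fderiv ℝ f x‖ ^ p) := by
    have hnn : ∀ x y, 0 ≤ K (x - y) * |f y - f x| ^ p := fun x y =>
      mul_nonneg (hK0 _) (by positivity)
    calc _ = ‖∫ x, ∫ y, K (x - y) * |f y - f x| ^ p‖ₑ :=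
          (Real.enorm_of_nonneg (integral_nonneg fun x => integral_nonneg fun y => hnn x y)).symm
      _ ≤ ∫⁻ x, ∫⁻ y, ‖K (x - y) * |f y - f x| ^ p‖ₑ :=
          (enorm_integral_le_lintegral_enorm _).trans
            (lintegral_mono fun x => enorm_integral_le_lintegral_enorm _)
      _ = ∫⁻ x, ∫⁻ w, ENNReal.ofReal (K w) * ENNReal.ofReal (|f (x + w) - f x| ^ p) := by
          refine lintegral_congr fun x => ?_
          rw [← lintegral_add_left_eq_self _ x]
          refine lintegral_congr fun w => ?_
          rw [Real.enorm_of_nonneg (hnn _ _), ENNReal.ofReal_mul (hK0 _)]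
          congr 2
          simp [hK]
      _ = ∫⁻ w, ∫⁻ x, ENNReal.ofReal (K w) * ENNReal.ofReal (|f (x + w) - f x| ^ p) := by
          refine lintegral_lintegral_swap (Measurable.aemeasurable ?_)
          refine Measurable.mul (ENNReal.continuous_ofReal.comp
            (hKc.comp continuous_snd)).measurable ?_
          refine (ENNReal.continuous_ofReal.comp ?_).measurable
          exact (by fun_prop : Continuous fun q : EuclideanSpace ℝ (Fin n) ×
            EuclideanSpace ℝ (Fin n) => |f (q.1 + q.2) - f q.1|).rpow_const
              (fun _ => Or.inr hp0)
      _ ≤ ∫⁻ w, ENNReal.ofReal (K w * ‖w‖ ^ p) *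
            ENNReal.ofReal (∫ x, ‖fderiv ℝ f x‖ ^ p) := by
          refine lintegral_mono fun w => ?_
          rw [lintegral_const_mul' _ _ ENNReal.ofReal_ne_top, ENNReal.ofReal_mul (hK0 _),
            mul_assoc, ofReal_integral_eq_lintegral_ofReal hDint
              (Filter.Eventually.of_forall fun x => by positivity)]
          exact mul_le_mul_right (hdq_translate hp hf w) _
      _ = _ := by
          have h0 : ∀ w, 0 ≤ K w * ‖w‖ ^ p := fun w => mul_nonneg (hK0 w) (by positivity)
          rw [lintegral_mul_const' _ _ ENNReal.ofReal_ne_top,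
            ENNReal.ofReal_mul (integral_nonneg h0),
            ofReal_integral_eq_lintegral_ofReal hKint (Filter.Eventually.of_forall h0)]
  have hk0 : 0 ≤ ∫ z, k z := integral_nonneg fun z => by simp only [hk]; positivity
  have hD0 : 0 ≤ ∫ x, ‖fderiv ℝ f x‖ ^ p := integral_nonneg fun z => by positivity
  rw [hKval, ENNReal.ofReal_le_ofReal_iff (by positivity)] at main
  calc _ ≤ t ^ (-(p/2)) * (t ^ (p/2) * (∫ z, k z) * ∫ x, ‖fderiv ℝ f x‖ ^ p) :=
        mul_le_mul_of_nonneg_left main (by positivity)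
    _ = (t ^ (-(p/2)) * t ^ (p/2)) * ((∫ z, k z) * ∫ x, ‖fderiv ℝ f x‖ ^ p) := by ring
    _ = _ := by rw [← Real.rpow_add ht]; simp
end

section
/- Let n ≥ 1, 1 ≤ p < ∞, and let f : ℝⁿ → ℝ be smooth with compact support. Then lim_{t → 0⁺} t^{-p/2} ∫_{ℝⁿ} ∫_{ℝⁿ} p_t(x,y) |f(y) − f(x)|^p dy dx = (2Γ(p)/Γ(p/2)) ∫_{ℝⁿ} ‖∇f(x)‖^p dx. -/
open Real MeasureTheory Filter Topology

lemma aux_oneD (p : ℝ) (hp : 1 ≤ p) :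
    ∫ s : ℝ, Real.exp (-s ^ 2 / 4) * |s| ^ p = 2 ^ (p + 1) * Real.Gamma ((p + 1) / 2) := by
  have h := integral_comp_abs (f := fun s : ℝ => s ^ p * Real.exp (-(1/4) * s ^ (2:ℝ)))
  rw [integral_rpow_mul_exp_neg_mul_rpow (by norm_num) (by linarith) (by norm_num)] at h
  have e : (fun s : ℝ => Real.exp (-s ^ 2 / 4) * |s| ^ p)
      = fun s : ℝ => |s| ^ p * Real.exp (-(1/4) * |s| ^ (2:ℝ)) := by
    funext s
    rw [Real.rpow_two, sq_abs, mul_comm]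
    congr 2
    ring
  rw [e, h]
  have : ((1/4 : ℝ)) ^ (-(p + 1) / 2) = 2 ^ (p + 1) := by
    have h4 : (1/4 : ℝ) = 2 ^ (-2 : ℝ) := by
      rw [Real.rpow_neg (by norm_num)]; norm_num
    rw [h4, ← Real.rpow_mul (by norm_num)]
    congr 1; ring
  rw [this]; ring

lemma aux_const (n : ℕ) (hn : 1 ≤ n) (p : ℝ) (hp : 1 ≤ p) :
    (4 * π) ^ (-(n : ℝ) / 2) *
      (2 ^ (p + 1) * Real.Gamma ((p + 1) / 2) * (√(4 * π)) ^ (n - 1)) =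
      2 * Real.Gamma p / Real.Gamma (p / 2) := by
  have hG : 0 < Real.Gamma (p / 2) := Real.Gamma_pos_of_pos (by linarith)
  have h4 : (0:ℝ) < 4 * π := by positivity
  have hd := Real.Gamma_mul_Gamma_add_half (p / 2)
  have e1 : p / 2 + 1 / 2 = (p + 1) / 2 := by ring
  have e2 : 2 * (p / 2) = p := by ring
  rw [e1, e2] at hd
  have h5 : (4 * π) ^ (-(n : ℝ) / 2) * (√(4 * π)) ^ (n - 1) = (2 * √π)⁻¹ := by
    have : (2 * √π)⁻¹ = (4 * π) ^ (-(1/2) : ℝ) := by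
      rw [Real.rpow_neg h4.le, ← Real.sqrt_eq_rpow, Real.sqrt_mul (by norm_num)]
      congr 2
      rw [show (4:ℝ) = 2 ^ 2 by norm_num, Real.sqrt_sq (by norm_num)]
    rw [this, Real.sqrt_eq_rpow, ← Real.rpow_natCast, ← Real.rpow_mul h4.le, ← Real.rpow_add h4]
    congr 1
    push_cast [hn]
    ring
  have h6 : (2:ℝ) ^ (p + 1) * 2 ^ (1 - p) = 4 := by
    rw [← Real.rpow_add (by norm_num)]
    norm_num [show p + 1 + (1 - p) = 2 by ring]
  rw [eq_div_iff hG.ne']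
  have hpi : 0 < √π := Real.sqrt_pos.mpr Real.pi_pos
  calc _ = ((4 * π) ^ (-(n : ℝ) / 2) * (√(4 * π)) ^ (n - 1)) * 2 ^ (p + 1) *
        (Real.Gamma (p / 2) * Real.Gamma ((p + 1) / 2)) := by ring
    _ = (2 * √π)⁻¹ * (2 ^ (p + 1) * 2 ^ (1 - p)) * (Real.Gamma p * √π) := by rw [h5, hd]; ring
    _ = _ := by rw [h6]; field_simp; norm_num

lemma aux_unit (n : ℕ) (hn : 1 ≤ n) (p : ℝ) (hp : 1 ≤ p)
    (u : EuclideanSpace ℝ (Fin n)) (hu : ‖u‖ = 1) :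
    ∫ z : EuclideanSpace ℝ (Fin n), Real.exp (-‖z‖ ^ 2 / 4) * |inner ℝ u z| ^ p =
      2 ^ (p + 1) * Real.Gamma ((p + 1) / 2) * (√(4 * π)) ^ (n - 1) := by
  let i0 : Fin n := ⟨0, hn⟩
  obtain ⟨b, hb⟩ := Orthonormal.exists_orthonormalBasis_extension_of_card_eq (𝕜 := ℝ)
    (E := EuclideanSpace ℝ (Fin n)) (ι := Fin n) (by simp) (v := fun _ => u) (s := {i0}) (by
      constructor
      · intro i; simpa using hu
      · intro i j hij
        exact absurd (Subsingleton.elim i j) hij)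
  have hb0 : b i0 = u := hb i0 rfl
  have hmp := (b.measurePreserving_repr_symm).comp (PiLp.volume_preserving_toLp (Fin n))
  have hemb : MeasurableEmbedding (b.repr.symm ∘ WithLp.toLp 2 : (Fin n → ℝ) → _) :=
    (b.repr.symm.toHomeomorph.measurableEmbedding).comp
      (MeasurableEquiv.toLp 2 (Fin n → ℝ)).measurableEmbedding
  rw [← hmp.integral_comp hemb]
  have key : ∀ w : Fin n → ℝ,
      Real.exp (-‖(b.repr.symm ∘ WithLp.toLp 2) w‖ ^ 2 / 4) *
        |inner ℝ u ((b.repr.symm ∘ WithLp.toLp 2) w)| ^ p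
      = ∏ i, (fun (i : Fin n) (s : ℝ) => Real.exp (-s ^ 2 / 4) *
          (if i = i0 then |s| ^ p else 1)) i (w i) := by
    intro w
    have h1 : ‖(b.repr.symm ∘ WithLp.toLp 2) w‖ ^ 2 = ∑ i, w i ^ 2 := by
      simp only [Function.comp, LinearIsometryEquiv.norm_map]
      rw [EuclideanSpace.norm_sq_eq]
      simp
    have h2 : inner ℝ u ((b.repr.symm ∘ WithLp.toLp 2) w) = w i0 := by
      rw [← hb0, ← b.repr_apply_apply]
      simp
    rw [h1, h2, Finset.prod_mul_distrib, ← Real.exp_sum]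
    simp [Finset.sum_div, neg_div, Finset.sum_neg_distrib]
  rw [integral_congr_ae (Eventually.of_forall key),
    integral_fintype_prod_volume_eq_prod (fun (i : Fin n) (s : ℝ) => Real.exp (-s ^ 2 / 4) *
          (if i = i0 then |s| ^ p else 1)), ← Finset.mul_prod_erase _ _ (Finset.mem_univ i0)]
  congr 1
  · simpa using aux_oneD p hp
  · rw [Finset.prod_congr rfl (g := fun _ => √(4 * π))]
    · simp
    · intro i hi
      have hi : i ≠ i0 := Finset.ne_of_mem_erase hi
      simp only [hi, if_false, mul_one]
      have := integral_gaussian (1/4)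
      rw [show π / (1/4) = 4 * π by ring] at this
      rw [← this]
      congr 1; funext s; congr 1; ring

lemma aux_moment (n : ℕ) (hn : 1 ≤ n) (p : ℝ) (hp : 1 ≤ p)
    (l : EuclideanSpace ℝ (Fin n) →L[ℝ] ℝ) :
    ∫ z : EuclideanSpace ℝ (Fin n), (4 * π) ^ (-(n : ℝ) / 2) * (Real.exp (-‖z‖ ^ 2 / 4) * |l z| ^ p) =
      2 * Real.Gamma p / Real.Gamma (p / 2) * ‖l‖ ^ p := by
  rw [integral_const_mul, ← aux_const n hn p hp]
  by_cases hl : l = 0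
  · subst hl
    simp [Real.zero_rpow (by linarith : p ≠ 0)]
  have hl' : 0 < ‖l‖ := norm_pos_iff.mpr hl
  set v := (InnerProductSpace.toDual ℝ (EuclideanSpace ℝ (Fin n))).symm l with hv
  have hnv : ‖v‖ = ‖l‖ := LinearIsometryEquiv.norm_map _ _
  have hu : ‖(‖l‖⁻¹ • v)‖ = 1 := by
    rw [norm_smul, hnv]; simp [hl'.ne']
  have := aux_unit n hn p hp _ hu
  rw [← this, mul_assoc, ← integral_mul_const]
  congr 2
  funext z
  have : l z = ‖l‖ * inner ℝ (‖l‖⁻¹ • v) z := by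
    rw [real_inner_smul_left, hv, InnerProductSpace.toDual_symm_apply]
    field_simp
  rw [this, abs_mul, abs_of_pos hl', Real.mul_rpow hl'.le (abs_nonneg _)]
  ring

lemma aux_bound (n : ℕ) (p : ℝ) (hp : 1 ≤ p) (m : ℝ) (hm : 0 ≤ m)
    (f : EuclideanSpace ℝ (Fin n) → ℝ) (hf : ContDiff ℝ (⊤ : ℕ∞) f)
    (hsupp : HasCompactSupport f) :
    ∃ C : ℝ, ∀ r : ℝ, 0 < r → r ≤ 1 → ∀ x z : EuclideanSpace ℝ (Fin n),
      Real.exp (-‖z‖ ^ 2 / 4) * |r⁻¹ * (f (x + r • z) - f x)| ^ p ≤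
        C * (1 + ‖x‖) ^ (-m) * (1 + ‖z‖) ^ (-m) := by
  obtain ⟨L, hL⟩ := hf.lipschitzWith_of_hasCompactSupport hsupp (by simp)
  obtain ⟨R, hR0, hR⟩ : ∃ R : ℝ, 0 ≤ R ∧ ∀ y, f y ≠ 0 → ‖y‖ ≤ R := by
    obtain ⟨R, hR⟩ := hsupp.isCompact.isBounded.exists_norm_le
    exact ⟨max R 0, le_max_right _ _, fun y hy =>
      (hR y (subset_tsupport f hy)).trans (le_max_left _ _)⟩
  set q := p + m + m with hq
  refine ⟨Real.exp (q ^ 2) * (L : ℝ) ^ p * (1 + R) ^ m, ?_⟩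
  intro r hr hr1 x z
  set s := ‖z‖ with hs
  have hs0 : 0 ≤ s := norm_nonneg z
  have h1s : 0 < 1 + s := by linarith
  have h1x : 0 < 1 + ‖x‖ := by positivity
  have hL0 : (0:ℝ) ≤ L := L.2
  by_cases h0 : f (x + r • z) - f x = 0
  · rw [h0]
    simp only [mul_zero, abs_zero, Real.zero_rpow (by linarith : p ≠ 0)]
    positivity
  have hx : ‖x‖ ≤ R + s := by
    by_cases hfx : f x = 0
    · have h2 : f (x + r • z) ≠ 0 := by
        intro h; apply h0; rw [h, hfx]; simp
      have h3 := hR _ h2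
      have h4 : ‖x‖ ≤ ‖x + r • z‖ + ‖r • z‖ := by
        have := norm_sub_le (x + r • z) (r • z)
        simpa using this
      rw [norm_smul, Real.norm_of_nonneg hr.le] at h4
      nlinarith
    · have := hR _ hfx
      linarith
  have hD : |r⁻¹ * (f (x + r • z) - f x)| ≤ L * (1 + s) := by
    have h3 := hL.dist_le_mul (x + r • z) x
    rw [Real.dist_eq, dist_eq_norm] at h3
    simp only [add_sub_cancel_left, norm_smul, Real.norm_of_nonneg hr.le] at h3
    rw [abs_mul, abs_of_pos (inv_pos.mpr hr), inv_mul_le_iff₀ hr]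
    have : (0:ℝ) ≤ r * L := by positivity
    nlinarith
  have hDp : |r⁻¹ * (f (x + r • z) - f x)| ^ p ≤ (L:ℝ) ^ p * (1 + s) ^ p := by
    rw [← Real.mul_rpow hL0 h1s.le]
    exact Real.rpow_le_rpow (abs_nonneg _) hD (by linarith)
  have hone : 1 ≤ (1 + R) ^ m * (1 + s) ^ m * (1 + ‖x‖) ^ (-m) := by
    rw [Real.rpow_neg h1x.le, ← div_eq_mul_inv, le_div_iff₀ (by positivity), one_mul,
      ← Real.mul_rpow (by linarith) h1s.le]
    apply Real.rpow_le_rpow h1x.le _ hm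
    nlinarith
  have hexp : Real.exp (-s ^ 2 / 4) ≤ Real.exp (q ^ 2) * (1 + s) ^ (-q) := by
    have hq0 : 0 ≤ q := by linarith
    rw [Real.rpow_neg h1s.le, ← div_eq_mul_inv, le_div_iff₀ (by positivity)]
    have : (1 + s) ^ q ≤ Real.exp (q * s) := by
      rw [mul_comm q s, Real.exp_mul]
      apply Real.rpow_le_rpow h1s.le _ hq0
      linarith [Real.add_one_le_exp s]
    calc _ ≤ Real.exp (-s ^ 2 / 4) * Real.exp (q * s) := by gcongr
      _ = Real.exp (-s ^ 2 / 4 + q * s) := by rw [Real.exp_add]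
      _ ≤ _ := by
        apply Real.exp_le_exp.mpr
        nlinarith [sq_nonneg (s / 2 - q)]
  have hcomb : (1 + s) ^ (-q) * (1 + s) ^ p * (1 + s) ^ m = (1 + s) ^ (-m) := by
    rw [← Real.rpow_add h1s, ← Real.rpow_add h1s]
    congr 1; rw [hq]; ring
  calc _ ≤ (Real.exp (q ^ 2) * (1 + s) ^ (-q)) * ((L:ℝ) ^ p * (1 + s) ^ p) * 1 := by
        rw [mul_one]; gcongr
    _ ≤ (Real.exp (q ^ 2) * (1 + s) ^ (-q)) * ((L:ℝ) ^ p * (1 + s) ^ p) *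
        ((1 + R) ^ m * (1 + s) ^ m * (1 + ‖x‖) ^ (-m)) := by gcongr
    _ = Real.exp (q ^ 2) * (L : ℝ) ^ p * (1 + R) ^ m * (1 + ‖x‖) ^ (-m) *
        ((1 + s) ^ (-q) * (1 + s) ^ p * (1 + s) ^ m) := by ring
    _ = _ := by rw [hcomb]

lemma aux_subst (n : ℕ) (p : ℝ) (f : EuclideanSpace ℝ (Fin n) → ℝ) (r : ℝ) (hr : 0 < r)
    (x : EuclideanSpace ℝ (Fin n)) :
    (r ^ 2) ^ (-(p / 2)) * ∫ y, (4 * π * r ^ 2) ^ (-(n : ℝ) / 2) *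
        Real.exp (-‖x - y‖ ^ 2 / (4 * r ^ 2)) * |f y - f x| ^ p =
      ∫ z : EuclideanSpace ℝ (Fin n), (4 * π) ^ (-(n : ℝ) / 2) *
        (Real.exp (-‖z‖ ^ 2 / 4) * |r⁻¹ * (f (x + r • z) - f x)| ^ p) := by
  rw [← integral_add_left_eq_self _ x]
  have h := Measure.integral_comp_smul (volume : Measure (EuclideanSpace ℝ (Fin n)))
    (fun y => (4 * π * r ^ 2) ^ (-(n : ℝ) / 2) *
        Real.exp (-‖x - (x + y)‖ ^ 2 / (4 * r ^ 2)) * |f (x + y) - f x| ^ p) r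
  have hrn : 0 < r ^ n := by positivity
  rw [finrank_euclideanSpace_fin, abs_of_pos (inv_pos.mpr hrn), smul_eq_mul,
    eq_inv_mul_iff_mul_eq₀ hrn.ne'] at h
  rw [← h, ← integral_const_mul, ← integral_const_mul]
  congr 1
  funext z
  have e1 : (r ^ 2) ^ (-(p / 2)) = (r⁻¹) ^ p := by
    rw [← Real.rpow_natCast, ← Real.rpow_mul hr.le, Real.inv_rpow hr.le, ← Real.rpow_neg hr.le]
    congr 1; push_cast; ring
  have e2 : (4 * π * r ^ 2) ^ (-(n : ℝ) / 2) = (4 * π) ^ (-(n : ℝ) / 2) * (r ^ n)⁻¹ := by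
    rw [Real.mul_rpow (by positivity) (by positivity)]
    congr 1
    rw [← Real.rpow_natCast, ← Real.rpow_natCast, ← Real.rpow_mul hr.le, ← Real.rpow_neg hr.le]
    congr 1; push_cast; ring
  have e3 : -‖x - (x + r • z)‖ ^ 2 / (4 * r ^ 2) = -‖z‖ ^ 2 / 4 := by
    rw [sub_add_cancel_left, norm_neg, norm_smul, Real.norm_of_nonneg hr.le]
    field_simp
  rw [e1, e2, e3, abs_mul, abs_of_pos (inv_pos.mpr hr),
    Real.mul_rpow (inv_pos.mpr hr).le (abs_nonneg _)]
  field_simp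

lemma aux_main (n : ℕ) (hn : 1 ≤ n) (p : ℝ) (hp : 1 ≤ p)
    (f : EuclideanSpace ℝ (Fin n) → ℝ) (hf : ContDiff ℝ (⊤ : ℕ∞) f)
    (hsupp : HasCompactSupport f) :
    Tendsto (fun r : ℝ => ∫ x : EuclideanSpace ℝ (Fin n), ∫ z : EuclideanSpace ℝ (Fin n),
        (4 * π) ^ (-(n : ℝ) / 2) *
        (Real.exp (-‖z‖ ^ 2 / 4) * |r⁻¹ * (f (x + r • z) - f x)| ^ p))
      (𝓝[>] (0 : ℝ))
      (𝓝 (2 * Real.Gamma p / Real.Gamma (p / 2) * ∫ x, ‖fderiv ℝ f x‖ ^ p)) := by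
  have hp0 : 0 ≤ p := by linarith
  obtain ⟨C, hC⟩ := aux_bound n p hp (n + 1) (by positivity) f hf hsupp
  have hint : Integrable (fun x : EuclideanSpace ℝ (Fin n) => (1 + ‖x‖) ^ (-((n : ℝ) + 1))) := by
    apply integrable_one_add_norm
    simp
  set K := (4 * π) ^ (-(n : ℝ) / 2) with hK
  have hK0 : 0 ≤ K := by positivity
  have hfc : Continuous f := hf.continuous
  have hev : ∀ᶠ r in 𝓝[>] (0:ℝ), 0 < r ∧ r ≤ 1 := by
    filter_upwards [Ioc_mem_nhdsGT (zero_lt_one' ℝ)] with r hr using hr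
  have hcont : ∀ r : ℝ, Continuous (fun q : EuclideanSpace ℝ (Fin n) × EuclideanSpace ℝ (Fin n) =>
      K * (Real.exp (-‖q.2‖ ^ 2 / 4) * |r⁻¹ * (f (q.1 + r • q.2) - f q.1)| ^ p)) := by
    intro r
    refine continuous_const.mul (Continuous.mul (by fun_prop) ?_)
    exact Continuous.rpow_const (by fun_prop) (fun _ => Or.inr hp0)
  have hb : ∀ r : ℝ, 0 < r → r ≤ 1 → ∀ x z : EuclideanSpace ℝ (Fin n),
      ‖K * (Real.exp (-‖z‖ ^ 2 / 4) * |r⁻¹ * (f (x + r • z) - f x)| ^ p)‖ ≤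
        (K * C * (1 + ‖x‖) ^ (-((n : ℝ) + 1))) * (1 + ‖z‖) ^ (-((n : ℝ) + 1)) := by
    intro r h1 h2 x z
    rw [Real.norm_of_nonneg (by positivity)]
    calc _ ≤ K * _ := mul_le_mul_of_nonneg_left (hC r h1 h2 x z) hK0
      _ = _ := by ring
  rw [← integral_const_mul]
  refine tendsto_integral_filter_of_dominated_convergence
    (fun x => (K * C * (1 + ‖x‖) ^ (-((n : ℝ) + 1))) *
      ∫ z : EuclideanSpace ℝ (Fin n), (1 + ‖z‖) ^ (-((n : ℝ) + 1))) ?_ ?_ ?_ ?_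
  · refine Eventually.of_forall fun r => ?_
    exact ((hcont r).stronglyMeasurable.integral_prod_right').aestronglyMeasurable
  · filter_upwards [hev] with r hr
    refine Eventually.of_forall fun x => ?_
    rw [← integral_const_mul]
    exact norm_integral_le_of_norm_le (hint.const_mul _)
      (Eventually.of_forall fun z => hb r hr.1 hr.2 x z)
  · exact (hint.const_mul _).mul_const _
  · refine Eventually.of_forall fun x => ?_
    rw [← aux_moment n hn p hp (fderiv ℝ f x)]
    refine tendsto_integral_filter_of_dominated_convergence
      (fun z => (K * C * (1 + ‖x‖) ^ (-((n : ℝ) + 1))) * (1 + ‖z‖) ^ (-((n : ℝ) + 1))) ?_ ?_ ?_ ?_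
    · refine Eventually.of_forall fun r => ?_
      exact ((hcont r).comp (Continuous.prodMk_right x)).aestronglyMeasurable
    · filter_upwards [hev] with r hr
      exact Eventually.of_forall fun z => hb r hr.1 hr.2 x z
    · exact hint.const_mul _
    · refine Eventually.of_forall fun z => ?_
      have hd : HasFDerivAt f (fderiv ℝ f x) x :=
        (hf.differentiable (by simp) x).hasFDerivAt
      have ht := (hd.hasLineDerivAt z).tendsto_slope_zero_right
      simp only [smul_eq_mul] at ht
      exact ((ht.abs.rpow_const (Or.inr hp0)).const_mul _).const_mul _

theorem heat_semigroup_limit_smooth (n : ℕ) (hn : 1 ≤ n) (p : ℝ) (hp : 1 ≤ p)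
    (f : EuclideanSpace ℝ (Fin n) → ℝ) (hf : ContDiff ℝ (⊤ : ℕ∞) f)
    (hsupp : HasCompactSupport f) :
    Tendsto (fun t : ℝ =>
        t ^ (-(p / 2)) *
          ∫ x, ∫ y,
            (4 * π * t) ^ (-(n : ℝ) / 2) * Real.exp (-‖x - y‖ ^ 2 / (4 * t)) *
              |f y - f x| ^ p)
      (𝓝[>] (0 : ℝ))
      (𝓝 (2 * Real.Gamma p / Real.Gamma (p / 2) * ∫ x, ‖fderiv ℝ f x‖ ^ p)) := by
  have hsq : Tendsto Real.sqrt (𝓝[>] (0:ℝ)) (𝓝[>] (0:ℝ)) := by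
    apply tendsto_nhdsWithin_iff.mpr
    constructor
    · have := Real.continuous_sqrt.tendsto 0
      rw [Real.sqrt_zero] at this
      exact this.mono_left nhdsWithin_le_nhds
    · filter_upwards [self_mem_nhdsWithin] with t ht
      exact Real.sqrt_pos.mpr ht
  refine ((aux_main n hn p hp f hf hsupp).comp hsq).congr' ?_
  filter_upwards [self_mem_nhdsWithin] with t ht
  have ht : 0 < t := ht
  have h2 : √t ^ 2 = t := Real.sq_sqrt ht.le
  rw [← integral_const_mul]
  simp only [Function.comp]
  congr 1
  funext x
  rw [← aux_subst n p f (√t) (Real.sqrt_pos.mpr ht) x, h2]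
end

section
/- Let n ≥ 1, 1 ≤ p < ∞, and let f : ℝⁿ → ℝ be smooth with compact support. Then lim_{s → 1⁻} (1−s) 𝒩_{s,p}(f)^p = (4 Γ(p) / (p Γ(p/2))) ∫_{ℝⁿ} ‖∇f(x)‖^p dx. -/
open Real MeasureTheory Filter Topology
open scoped ENNReal


lemma abel_subst (p : ℝ) (H : ℝ → ℝ≥0∞) (s : ℝ) (hs : s < 1) :
    ENNReal.ofReal (1 - s) * ∫⁻ t in Set.Ioi (0:ℝ), ENNReal.ofReal (t ^ (-(s * p / 2 + 1))) * H t
    = ∫⁻ v : ℝ, ENNReal.ofReal (Real.exp (v * (p / 2) * (s / (1 - s)))) * H (Real.exp (-v / (1 - s))) := by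
  have h1 : 0 < 1 - s := by linarith
  have him : (fun v : ℝ => Real.exp (-v / (1 - s))) '' Set.univ = Set.Ioi 0 := by
    ext t
    simp only [Set.image_univ, Set.mem_range, Set.mem_Ioi]
    constructor
    · rintro ⟨v, rfl⟩; exact Real.exp_pos _
    · intro ht
      refine ⟨-(1 - s) * Real.log t, ?_⟩
      have : -(-(1 - s) * Real.log t) / (1 - s) = Real.log t := by field_simp
      rw [this, Real.exp_log ht]
  have hd : ∀ v ∈ (Set.univ : Set ℝ), HasDerivWithinAt (fun v : ℝ => Real.exp (-v / (1 - s)))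
      (Real.exp (-v / (1 - s)) * (-1 / (1 - s))) Set.univ v := by
    intro v _
    have := (((hasDerivAt_id v).neg.div_const (1 - s)).exp)
    exact this.hasDerivWithinAt
  have hinj : Set.InjOn (fun v : ℝ => Real.exp (-v / (1 - s))) Set.univ := by
    intro a _ b _ h
    have h2 := Real.exp_injective h
    field_simp at h2
    linarith
  rw [← him, lintegral_image_eq_lintegral_abs_deriv_mul MeasurableSet.univ hd hinj,
    ← lintegral_const_mul' _ _ ENNReal.ofReal_ne_top, Measure.restrict_univ]
  congr 1
  ext v
  rw [← mul_assoc, ← mul_assoc, ← ENNReal.ofReal_mul h1.le, ← ENNReal.ofReal_mul (by positivity)]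
  congr 2
  rw [abs_mul, abs_of_pos (Real.exp_pos _), ← Real.exp_mul]
  have : |-1 / (1 - s)| = 1 / (1 - s) := by
    rw [abs_div, abs_neg, abs_one, abs_of_pos h1]
  rw [this]
  have : (1 - s) * (Real.exp (-v / (1 - s)) * (1 / (1 - s))) = Real.exp (-v / (1 - s)) := by
    field_simp
  rw [this, ← Real.exp_add]
  congr 1
  field_simp
  ring

lemma int_exp_abs (a : ℝ) (ha : 0 < a) : Integrable (fun v : ℝ => Real.exp (-a * |v|)) := by
  have h1 : IntegrableOn (fun v : ℝ => Real.exp (-a * v)) (Set.Ioi 0) :=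
    integrableOn_exp_mul_Ioi (by linarith) 0
  have := (integrable_fun_norm_addHaar (volume : Measure ℝ) (f := fun v : ℝ => Real.exp (-a * v))).2
    (by simpa using h1)
  exact this

lemma abel_limit (p : ℝ) (hp : 0 < p) (H : ℝ → ℝ≥0∞) (hH : Measurable H) (C : ℝ) (hC0 : 0 ≤ C)
    (L : ℝ≥0∞)
    (hC : ∀ t > 0, H t ≤ ENNReal.ofReal C) (hC' : ∀ t > 0, H t ≤ ENNReal.ofReal (C * t ^ (p / 2)))
    (hlim : Tendsto (fun t => ENNReal.ofReal (t ^ (-(p / 2))) * H t) (𝓝[>] 0) (𝓝 L)) :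
    Tendsto (fun s : ℝ => ENNReal.ofReal (1 - s) *
      ∫⁻ t in Set.Ioi (0:ℝ), ENNReal.ofReal (t ^ (-(s * p / 2 + 1))) * H t) (𝓝[<] 1)
      (𝓝 (ENNReal.ofReal (2 / p) * L)) := by
  have hev : ∀ᶠ s : ℝ in 𝓝[<] 1, 1 / 2 < s ∧ s < 1 := by
    have := Ioo_mem_nhdsLT (show (1/2:ℝ) < 1 by norm_num)
    filter_upwards [this] with s hs using hs
  have hsub : Tendsto (fun s : ℝ => (1 - s)⁻¹) (𝓝[<] 1) atTop := by
    refine tendsto_inv_nhdsGT_zero.comp ?_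
    refine tendsto_nhdsWithin_iff.2 ⟨?_, ?_⟩
    · have : Tendsto (fun s : ℝ => 1 - s) (𝓝 1) (𝓝 (1 - 1)) := by
        exact (continuous_const.sub continuous_id).tendsto 1
      rw [sub_self] at this
      exact this.mono_left nhdsWithin_le_nhds
    · filter_upwards [self_mem_nhdsWithin] with s hs
      have : s < 1 := hs
      simp [this]
  have hL : ∫⁻ v : ℝ, (Set.Ioi (0:ℝ)).indicator
      (fun v => ENNReal.ofReal (Real.exp (-(p / 2) * v)) * L) v = ENNReal.ofReal (2 / p) * L := by
    rw [lintegral_indicator measurableSet_Ioi, lintegral_mul_const _ (by fun_prop),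
      ← ofReal_integral_eq_lintegral_ofReal (integrableOn_exp_mul_Ioi (by linarith) 0)
        (ae_of_all _ fun _ => (Real.exp_pos _).le),
      integral_exp_mul_Ioi (by linarith)]
    congr 2
    simp
  rw [← hL]
  have hcongr : (fun s : ℝ => ENNReal.ofReal (1 - s) *
      ∫⁻ t in Set.Ioi (0:ℝ), ENNReal.ofReal (t ^ (-(s * p / 2 + 1))) * H t) =ᶠ[𝓝[<] 1]
      fun s => ∫⁻ v : ℝ, ENNReal.ofReal (Real.exp (v * (p / 2) * (s / (1 - s)))) *
        H (Real.exp (-v / (1 - s))) := by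
    filter_upwards [self_mem_nhdsWithin] with s hs
    exact abel_subst p H s hs
  refine Tendsto.congr' hcongr.symm ?_
  refine tendsto_lintegral_filter_of_dominated_convergence
    (fun v => ENNReal.ofReal (C * Real.exp (-(p / 2) * |v|))) ?_ ?_ ?_ ?_
  · refine Eventually.of_forall fun s => ?_
    have : Measurable fun v : ℝ => H (Real.exp (-v / (1 - s))) := hH.comp (by fun_prop)
    fun_prop
  · filter_upwards [hev] with s ⟨hs, hs1⟩
    refine ae_of_all _ fun v => ?_
    have h1 : 0 < 1 - s := by linarith
    rcases le_total 0 v with hv | hv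
    · calc _ ≤ ENNReal.ofReal (Real.exp (v * (p / 2) * (s / (1 - s)))) *
          ENNReal.ofReal (C * Real.exp (-v / (1 - s)) ^ (p / 2)) := by
            gcongr; exact hC' _ (Real.exp_pos _)
        _ = _ := by
          rw [← ENNReal.ofReal_mul (Real.exp_pos _).le, abs_of_nonneg hv, ← Real.exp_mul,
            mul_left_comm, ← Real.exp_add]
          congr 3
          field_simp
          ring
    · calc _ ≤ ENNReal.ofReal (Real.exp (v * (p / 2) * (s / (1 - s)))) *
          ENNReal.ofReal C := by
            gcongr; exact hC _ (Real.exp_pos _)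
        _ ≤ _ := by
          rw [← ENNReal.ofReal_mul (Real.exp_pos _).le, mul_comm]
          refine ENNReal.ofReal_le_ofReal (mul_le_mul_of_nonneg_left (Real.exp_le_exp.2 ?_) hC0)
          rw [abs_of_nonpos hv]
          have : 1 ≤ s / (1 - s) := by rw [le_div_iff₀ h1]; linarith
          have h3 : v * (p / 2) ≤ 0 := mul_nonpos_of_nonpos_of_nonneg hv (by linarith)
          nlinarith
  · have := ((int_exp_abs (p / 2) (by linarith)).const_mul C).lintegral_lt_top
    exact this.ne
  · have : ∀ᵐ v : ℝ, v ≠ 0 := by simp [ae_iff]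
    filter_upwards [this] with v hv
    rcases lt_or_gt_of_ne hv with hv | hv
    · rw [Set.indicator_of_notMem (by simpa using hv.le)]
      have hup : Tendsto (fun s : ℝ => ENNReal.ofReal
          (Real.exp (v * (p / 2) * (s / (1 - s))) * C)) (𝓝[<] 1) (𝓝 0) := by
        have h1 : Tendsto (fun s : ℝ => s / (1 - s)) (𝓝[<] 1) atTop := by
          refine Tendsto.congr' ?_ (tendsto_atTop_add_const_right _ (-1) hsub)
          filter_upwards [self_mem_nhdsWithin] with s hs
          have : s < 1 := hs
          have : 1 - s ≠ 0 := by linarith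
          field_simp
          ring
        have h2 : Tendsto (fun s : ℝ => v * (p / 2) * (s / (1 - s))) (𝓝[<] 1) atBot :=
          h1.const_mul_atTop_of_neg (mul_neg_of_neg_of_pos hv (by linarith))
        have h3 := (Real.tendsto_exp_atBot.comp h2).mul_const C
        rw [zero_mul] at h3
        have := ENNReal.tendsto_ofReal h3
        rw [ENNReal.ofReal_zero] at this
        exact this
      refine tendsto_of_tendsto_of_tendsto_of_le_of_le tendsto_const_nhds hup (fun _ => zero_le)
        fun s => ?_
      simp only
      rw [ENNReal.ofReal_mul (Real.exp_pos _).le]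
      gcongr
      exact hC _ (Real.exp_pos _)
    · rw [Set.indicator_of_mem (by simpa using hv)]
      have h1 : Tendsto (fun s : ℝ => Real.exp (-v / (1 - s))) (𝓝[<] 1) (𝓝[>] 0) := by
        refine tendsto_nhdsWithin_iff.2 ⟨?_, Eventually.of_forall fun _ => Real.exp_pos _⟩
        refine Real.tendsto_exp_atBot.comp ?_
        simp only [div_eq_mul_inv]
        exact hsub.const_mul_atTop_of_neg (by linarith)
      have h2 := ENNReal.Tendsto.const_mul (hlim.comp h1)
        (Or.inr (ENNReal.ofReal_ne_top (r := Real.exp (-(p / 2) * v))))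
      refine Tendsto.congr' ?_ h2
      filter_upwards [hev] with s ⟨hs, hs1⟩
      have h1 : 0 < 1 - s := by linarith
      simp only [Function.comp]
      rw [← mul_assoc, ← ENNReal.ofReal_mul (Real.exp_pos _).le, ← Real.exp_mul, ← Real.exp_add]
      congr 3
      field_simp
      ring


noncomputable def gw (n : ℕ) (z : EuclideanSpace ℝ (Fin n)) : ℝ :=
  (4 * π) ^ (-(n : ℝ) / 2) * Real.exp (-‖z‖ ^ 2 / 4)

lemma gw_nonneg (n : ℕ) (z : EuclideanSpace ℝ (Fin n)) : 0 ≤ gw n z := by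
  unfold gw; positivity

lemma gw_cont (n : ℕ) : Continuous (gw n) := by
  unfold gw; fun_prop

lemma gw_moment (n : ℕ) (hn : 1 ≤ n) (p : ℝ) (hp : 0 ≤ p) :
    Integrable (fun z => gw n z * ‖z‖ ^ p) := by
  have : Nonempty (Fin n) := ⟨⟨0, hn⟩⟩
  have := (integrable_fun_norm_addHaar (volume : Measure (EuclideanSpace ℝ (Fin n)))
    (f := fun r : ℝ => (4 * π) ^ (-(n : ℝ) / 2) * Real.exp (-r ^ 2 / 4) * r ^ p)).2 ?_
  · exact this
  · have h1 := (integrable_rpow_mul_exp_neg_mul_sq (b := 1 / 4) (by norm_num)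
      (s := ((n - 1 : ℕ) : ℝ) + p) (by have : (0:ℝ) ≤ ((n - 1 : ℕ) : ℝ) := by positivity
                                       linarith)).const_mul ((4 * π) ^ (-(n : ℝ) / 2))
    refine (h1.integrableOn (s := Set.Ioi 0)).congr_fun ?_ measurableSet_Ioi
    intro r hr
    have hr : 0 < r := hr
    simp only [finrank_euclideanSpace, Fintype.card_fin, smul_eq_mul]
    rw [Real.rpow_add hr, Real.rpow_natCast, show -(1 / 4) * r ^ 2 = -r ^ 2 / 4 by ring]
    ring

lemma one_dim (p : ℝ) (hp : 1 ≤ p) :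
    ∫ r : ℝ, (4 * π) ^ (-(1:ℝ) / 2) * Real.exp (-r ^ 2 / 4) * |r| ^ p =
      2 * Real.Gamma p / Real.Gamma (p / 2) := by
  have h := integral_comp_abs
    (f := fun r : ℝ => (4 * π) ^ (-(1:ℝ) / 2) * Real.exp (-r ^ 2 / 4) * r ^ p)
  simp only [sq_abs] at h
  rw [h]
  have h2 := integral_rpow_mul_exp_neg_mul_rpow (p := 2) (q := p) (b := 1 / 4) (by norm_num)
    (by linarith) (by norm_num)
  have h3 : ∫ r in Set.Ioi (0:ℝ), (4 * π) ^ (-(1:ℝ) / 2) * Real.exp (-r ^ 2 / 4) * r ^ p =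
      (4 * π) ^ (-(1:ℝ) / 2) * ∫ r in Set.Ioi (0:ℝ), r ^ p * Real.exp (-(1 / 4) * r ^ (2:ℝ)) := by
    rw [← integral_const_mul]
    congr 1
    ext r
    rw [Real.rpow_two, show -(1 / 4) * r ^ 2 = -r ^ 2 / 4 by ring]
    ring
  rw [h3, h2]
  have hG := Real.Gamma_mul_Gamma_add_half (p / 2)
  rw [show 2 * (p / 2) = p by ring, show p / 2 + 1 / 2 = (p + 1) / 2 by ring] at hG
  have hpos : 0 < Real.Gamma (p / 2) := Real.Gamma_pos_of_pos (by linarith)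
  have e1 : (1 / 4 : ℝ) ^ (-(p + 1) / 2) = 2 ^ p * 2 := by
    rw [show (1 / 4 : ℝ) = 2 ^ (-2 : ℝ) by rw [Real.rpow_neg (by norm_num)]; norm_num,
      ← Real.rpow_mul (by norm_num), show (-2 : ℝ) * (-(p + 1) / 2) = p + 1 by ring,
      Real.rpow_add (by norm_num), Real.rpow_one]
  have e2 : (4 * π) ^ (-(1:ℝ) / 2) = 1 / (2 * √π) := by
    rw [show -(1:ℝ) / 2 = -(1 / 2) by ring, Real.rpow_neg (by positivity), ← Real.sqrt_eq_rpow,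
      Real.sqrt_mul (by norm_num), show (4:ℝ) = 2 ^ 2 by norm_num, Real.sqrt_sq (by norm_num)]
    simp
  have e3 : (2:ℝ) ^ (1 - p) = 2 / 2 ^ p := by
    rw [Real.rpow_sub (by norm_num), Real.rpow_one]
  rw [e3] at hG
  rw [e1, e2]
  have : 0 < √π := Real.sqrt_pos.2 Real.pi_pos
  have h2p : (0:ℝ) < 2 ^ p := by positivity
  rw [eq_div_iff hpos.ne']
  field_simp at hG ⊢
  linarith

lemma one_dim_zero : ∫ r : ℝ, (4 * π) ^ (-(1:ℝ) / 2) * Real.exp (-r ^ 2 / 4) = 1 := by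
  rw [integral_const_mul]
  have := integral_gaussian (1 / 4)
  rw [show (fun r : ℝ => Real.exp (-r ^ 2 / 4)) = fun r => Real.exp (-(1 / 4) * r ^ 2) by
    ext r; congr 1; ring]
  rw [this, show -(1:ℝ) / 2 = -(1 / 2) by ring, Real.rpow_neg (by positivity), ← Real.sqrt_eq_rpow,
    show π / (1 / 4) = 4 * π by ring]
  exact inv_mul_cancel₀ (by positivity)

lemma gw_dir (n : ℕ) (p : ℝ) (hp : 1 ≤ p) (i₀ : Fin n) :
    ∫ z : EuclideanSpace ℝ (Fin n), gw n z * |z i₀| ^ p = 2 * Real.Gamma p / Real.Gamma (p / 2) := by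
  rw [← (PiLp.volume_preserving_toLp (Fin n)).integral_comp
    (MeasurableEquiv.toLp 2 (Fin n → ℝ)).measurableEmbedding]
  have : ∀ z : Fin n → ℝ, gw n (WithLp.toLp 2 z) * |(WithLp.toLp 2 z) i₀| ^ p =
      ∏ i, ((4 * π) ^ (-(1:ℝ) / 2) * Real.exp (-(z i) ^ 2 / 4) * if i = i₀ then |z i| ^ p else 1) := by
    intro z
    rw [Finset.prod_mul_distrib, Finset.prod_mul_distrib, Finset.prod_ite_eq' Finset.univ i₀]
    simp only [Finset.mem_univ, if_true, Finset.prod_const, Finset.card_univ, Fintype.card_fin]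
    rw [← Real.exp_sum, ← Real.rpow_mul_natCast (by positivity), gw, EuclideanSpace.norm_sq_eq]
    congr 3
    · ring
    · simp [Finset.sum_div, Finset.sum_neg_distrib, neg_div]
  simp only [this]
  rw [integral_fintype_prod_volume_eq_prod (f := fun i (r : ℝ) =>
    (4 * π) ^ (-(1:ℝ) / 2) * Real.exp (-r ^ 2 / 4) * if i = i₀ then |r| ^ p else 1)]
  have : ∀ i, (∫ r : ℝ, (4 * π) ^ (-(1:ℝ) / 2) * Real.exp (-r ^ 2 / 4) *
      if i = i₀ then |r| ^ p else 1) = if i = i₀ then 2 * Real.Gamma p / Real.Gamma (p / 2) else 1 := by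
    intro i
    split_ifs
    · exact one_dim p hp
    · simpa using one_dim_zero
  simp only [this, Finset.prod_ite_eq', Finset.mem_univ, if_true]

lemma gw_total (n : ℕ) : ∫⁻ z : EuclideanSpace ℝ (Fin n), ENNReal.ofReal (gw n z) = 1 := by
  have hr : ∫ z : EuclideanSpace ℝ (Fin n), gw n z = 1 := by
    rw [← (PiLp.volume_preserving_toLp (Fin n)).integral_comp
      (MeasurableEquiv.toLp 2 (Fin n → ℝ)).measurableEmbedding]
    have : ∀ z : Fin n → ℝ, gw n (WithLp.toLp 2 z) =
        ∏ i, ((4 * π) ^ (-(1:ℝ) / 2) * Real.exp (-(z i) ^ 2 / 4)) := by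
      intro z
      rw [Finset.prod_mul_distrib]
      simp only [Finset.prod_const, Finset.card_univ, Fintype.card_fin]
      rw [← Real.exp_sum, ← Real.rpow_mul_natCast (by positivity), gw, EuclideanSpace.norm_sq_eq]
      congr 2
      · ring
      · simp [Finset.sum_div, Finset.sum_neg_distrib, neg_div]
    simp only [this]
    rw [integral_fintype_prod_volume_eq_pow (fun r : ℝ =>
      (4 * π) ^ (-(1:ℝ) / 2) * Real.exp (-r ^ 2 / 4)), one_dim_zero, one_pow]
  have hi : Integrable (gw n) := by
    by_contra h
    rw [integral_undef h] at hr
    norm_num at hr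
  rw [← ofReal_integral_eq_lintegral_ofReal hi (ae_of_all _ (gw_nonneg n)), hr, ENNReal.ofReal_one]

lemma gw_clm (n : ℕ) (hn : 1 ≤ n) (p : ℝ) (hp : 1 ≤ p) (A : EuclideanSpace ℝ (Fin n) →L[ℝ] ℝ) :
    ∫⁻ z, ENNReal.ofReal (gw n z * |A z| ^ p) =
      ENNReal.ofReal (2 * Real.Gamma p / Real.Gamma (p / 2) * ‖A‖ ^ p) := by
  have hint : Integrable (fun z => gw n z * |A z| ^ p) := by
    refine ((gw_moment n hn p (by linarith)).const_mul (‖A‖ ^ p)).mono' ?_ ?_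
    · exact ((gw_cont n).mul (A.continuous.abs.rpow_const (fun _ => Or.inr (by linarith)))).aestronglyMeasurable
    · refine ae_of_all _ fun z => ?_
      rw [Real.norm_of_nonneg (mul_nonneg (gw_nonneg n z) (by positivity)), mul_left_comm,
        ← Real.mul_rpow (norm_nonneg _) (norm_nonneg _)]
      refine mul_le_mul_of_nonneg_left (Real.rpow_le_rpow (abs_nonneg _) ?_ (by linarith)) (gw_nonneg n z)
      exact A.le_opNorm z
  rw [← ofReal_integral_eq_lintegral_ofReal hint
    (ae_of_all _ fun z => mul_nonneg (gw_nonneg n z) (by positivity))]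
  congr 1
  obtain ⟨a, rfl⟩ := (InnerProductSpace.toDual ℝ (EuclideanSpace ℝ (Fin n))).surjective A
  rw [LinearIsometryEquiv.norm_map]
  simp only [InnerProductSpace.toDual_apply_apply]
  rcases eq_or_ne a 0 with rfl | ha
  · simp [Real.zero_rpow (by linarith : p ≠ 0)]
  let i₀ : Fin n := ⟨0, hn⟩
  have hna : ‖a‖ ≠ 0 := norm_ne_zero_iff.2 ha
  have hu : ‖‖a‖⁻¹ • a‖ = 1 := by
    rw [norm_smul, norm_inv, norm_norm]
    exact inv_mul_cancel₀ hna
  obtain ⟨b, hb⟩ := Orthonormal.exists_orthonormalBasis_extension_of_card_eq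
    (𝕜 := ℝ) (ι := Fin n) (E := EuclideanSpace ℝ (Fin n)) (by simp)
    (v := fun _ => (‖a‖⁻¹ • a)) (s := {i₀}) (by
      rw [orthonormal_iff_ite]
      rintro ⟨i, hi⟩ ⟨j, hj⟩
      simp only [Set.mem_singleton_iff] at hi hj
      subst hi; subst hj
      simp [hu])
  have hb0 := hb i₀ rfl
  have key : ∀ z, gw n z * |inner ℝ a z| ^ p = ‖a‖ ^ p * (gw n (b.repr z) * |b.repr z i₀| ^ p) := by
    intro z
    rw [b.repr_apply_apply, hb0, inner_smul_left, gw, gw, LinearIsometryEquiv.norm_map,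
      mul_left_comm (‖a‖ ^ p), ← Real.mul_rpow (norm_nonneg _) (abs_nonneg _)]
    congr 2
    simp [abs_mul]
    field_simp
  simp only [key]
  rw [integral_const_mul, b.measurePreserving_repr.integral_comp
    b.repr.toHomeomorph.measurableEmbedding (fun z => gw n z * |z i₀| ^ p), gw_dir n p hp i₀]
  ring

lemma lint_rescale (n : ℕ) (F : EuclideanSpace ℝ (Fin n) → ℝ≥0∞) (hF : Measurable F)
    (x : EuclideanSpace ℝ (Fin n)) (r : ℝ) (hr : 0 < r) :
    ∫⁻ y, F y = ENNReal.ofReal (r ^ n) * ∫⁻ z, F (x + r • z) := by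
  have h1 : ∫⁻ z, F (x + r • z) = ∫⁻ w, F (x + w) ∂(Measure.map (fun z => r • z) volume) := by
    rw [lintegral_map (by fun_prop) (by fun_prop)]
  rw [h1, Measure.map_addHaar_smul _ hr.ne', lintegral_smul_measure, lintegral_add_left_eq_self]
  simp only [finrank_euclideanSpace, Fintype.card_fin, smul_eq_mul]
  rw [← mul_assoc, ← ENNReal.ofReal_mul (by positivity), abs_of_pos (by positivity),
    mul_inv_cancel₀ (by positivity), ENNReal.ofReal_one, one_mul]

lemma heat_rescale (n : ℕ) (p : ℝ) (hp : 1 ≤ p) (f : EuclideanSpace ℝ (Fin n) → ℝ)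
    (hf : Continuous f) (t : ℝ) (ht : 0 < t) (x : EuclideanSpace ℝ (Fin n)) :
    ∫⁻ y, ENNReal.ofReal
              ((4 * π * t) ^ (-(n : ℝ) / 2) * Real.exp (-‖x - y‖ ^ 2 / (4 * t)) *
                |f y - f x| ^ p) =
    ∫⁻ z, ENNReal.ofReal (gw n z * |f (x + √t • z) - f x| ^ p) := by
  rw [lint_rescale n _ (by fun_prop) x (√t) (Real.sqrt_pos.2 ht),
    ← lintegral_const_mul' _ _ ENNReal.ofReal_ne_top]
  congr 1
  ext z
  rw [← ENNReal.ofReal_mul (by positivity), ← mul_assoc, gw]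
  congr 2
  have h1 : ‖x - (x + √t • z)‖ ^ 2 / (4 * t) = ‖z‖ ^ 2 / 4 := by
    rw [show x - (x + √t • z) = -(√t • z) by abel, norm_neg, norm_smul,
      Real.norm_of_nonneg (Real.sqrt_nonneg _), mul_pow, Real.sq_sqrt ht.le]
    field_simp
  have h2 : -‖x - (x + √t • z)‖ ^ 2 / (4 * t) = -‖z‖ ^ 2 / 4 := by
    rw [neg_div, h1, neg_div]
  rw [h2, ← mul_assoc]
  congr 1
  rw [Real.mul_rpow (by positivity) ht.le, mul_left_comm]
  have : √t ^ n * t ^ (-(n:ℝ) / 2) = 1 := by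
    rw [Real.sqrt_eq_rpow, ← Real.rpow_mul_natCast ht.le, ← Real.rpow_add ht,
      show 1 / 2 * (n:ℝ) + -(n:ℝ) / 2 = 0 by ring, Real.rpow_zero]
  rw [this, mul_one]

lemma heat_swap (n : ℕ) (p : ℝ) (hp : 1 ≤ p) (f : EuclideanSpace ℝ (Fin n) → ℝ)
    (hf : Continuous f) (t : ℝ) (ht : 0 < t) :
    ∫⁻ x, ∫⁻ y, ENNReal.ofReal
              ((4 * π * t) ^ (-(n : ℝ) / 2) * Real.exp (-‖x - y‖ ^ 2 / (4 * t)) *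
                |f y - f x| ^ p) =
    ∫⁻ z, ENNReal.ofReal (gw n z) * ∫⁻ x, ENNReal.ofReal (|f (x + √t • z) - f x| ^ p) := by
  simp only [heat_rescale n p hp f hf t ht]
  rw [lintegral_lintegral_swap]
  · congr 1
    ext z
    rw [← lintegral_const_mul' _ _ ENNReal.ofReal_ne_top]
    congr 1
    ext x
    rw [ENNReal.ofReal_mul (gw_nonneg n z)]
  · have := gw_cont n
    apply Measurable.aemeasurable
    unfold Function.uncurry
    fun_prop

lemma phi_bound {n : ℕ} {p : ℝ} (hp : 1 ≤ p) {f : EuclideanSpace ℝ (Fin n) → ℝ}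
    (w : EuclideanSpace ℝ (Fin n)) (c : ℝ)
    (hc : ∀ x, |f (x + w) - f x| ^ p ≤ c) :
    ∫⁻ x, ENNReal.ofReal (|f (x + w) - f x| ^ p) ≤ 2 * volume (tsupport f) * ENNReal.ofReal c := by
  have hm : MeasurableSet (tsupport f) := (isClosed_tsupport f).measurableSet
  calc _ ≤ ∫⁻ x, ((tsupport f).indicator (fun _ => ENNReal.ofReal c) x +
        (tsupport f).indicator (fun _ => ENNReal.ofReal c) (x + w)) := by
        refine lintegral_mono fun x => ?_
        by_cases h1 : x ∈ tsupport f
        · rw [Set.indicator_of_mem h1]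
          exact (ENNReal.ofReal_le_ofReal (hc x)).trans le_self_add
        by_cases h2 : x + w ∈ tsupport f
        · rw [Set.indicator_of_mem h2]
          exact (ENNReal.ofReal_le_ofReal (hc x)).trans le_add_self
        · simp [image_eq_zero_of_notMem_tsupport h1, image_eq_zero_of_notMem_tsupport h2,
            Real.zero_rpow (by linarith : p ≠ 0)]
    _ = _ := by
        rw [lintegral_add_left (measurable_const.indicator hm),
          lintegral_add_right_eq_self (fun x => (tsupport f).indicator (fun _ => ENNReal.ofReal c) x),
          lintegral_indicator hm, lintegral_const]
        simp
        ring

open scoped Pointwise in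
lemma phi_lim {n : ℕ} {p : ℝ} (hp : 1 ≤ p) {f : EuclideanSpace ℝ (Fin n) → ℝ}
    (hf : ContDiff ℝ 1 f) (hsupp : HasCompactSupport f) (K : ℝ) (hK0 : 0 ≤ K)
    (hK : ∀ x w, |f (x + w) - f x| ≤ K * ‖w‖) (z : EuclideanSpace ℝ (Fin n)) :
    Tendsto (fun r : ℝ => ∫⁻ x, ENNReal.ofReal ((r⁻¹ * |f (x + r • z) - f x|) ^ p)) (𝓝[>] 0)
      (𝓝 (∫⁻ x, ENNReal.ofReal (|fderiv ℝ f x z| ^ p))) := by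
  have hfc : Continuous f := hf.continuous
  have hB : IsCompact (tsupport f + Metric.closedBall (0 : EuclideanSpace ℝ (Fin n)) ‖z‖) :=
    IsCompact.add hsupp (isCompact_closedBall _ _)
  refine tendsto_lintegral_filter_of_dominated_convergence
    ((tsupport f + Metric.closedBall (0 : EuclideanSpace ℝ (Fin n)) ‖z‖).indicator
      fun _ => ENNReal.ofReal ((K * ‖z‖) ^ p)) ?_ ?_ ?_ ?_
  · exact Eventually.of_forall fun r => by fun_prop
  · filter_upwards [Ioo_mem_nhdsGT (show (0:ℝ) < 1 by norm_num)] with r hr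
    obtain ⟨hr0, hr1⟩ := hr
    refine ae_of_all _ fun x => ?_
    by_cases hx : x ∈ tsupport f + Metric.closedBall (0 : EuclideanSpace ℝ (Fin n)) ‖z‖
    · rw [Set.indicator_of_mem hx]
      refine ENNReal.ofReal_le_ofReal (Real.rpow_le_rpow (by positivity) ?_ (by linarith))
      rw [inv_mul_le_iff₀ hr0]
      refine (hK x (r • z)).trans (le_of_eq ?_)
      rw [norm_smul, Real.norm_of_nonneg hr0.le]
      ring
    · have h1 : x ∉ tsupport f := fun h => hx
        (Set.mem_add.2 ⟨x, h, 0, by simp, by simp⟩)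
      have h2 : x + r • z ∉ tsupport f := fun h => hx
        (Set.mem_add.2 ⟨_, h, -(r • z), by
          simp only [mem_closedBall_zero_iff, norm_neg, norm_smul, Real.norm_of_nonneg hr0.le]
          exact mul_le_of_le_one_left (norm_nonneg _) hr1.le, by simp⟩)
      simp [image_eq_zero_of_notMem_tsupport h1, image_eq_zero_of_notMem_tsupport h2,
            Real.zero_rpow (by linarith : p ≠ 0)]
  · rw [lintegral_indicator hB.measurableSet, lintegral_const]
    refine ENNReal.mul_ne_top ENNReal.ofReal_ne_top ?_
    simpa using hB.measure_lt_top.ne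
  · refine ae_of_all _ fun x => ?_
    have h1 := (((hf.differentiable (by norm_num) x).hasFDerivAt.hasLineDerivAt z).tendsto_slope_zero_right)
    have h2 := ENNReal.tendsto_ofReal ((h1.abs).rpow_const (p := p) (Or.inr (by linarith)))
    refine Tendsto.congr' ?_ h2
    filter_upwards [self_mem_nhdsWithin] with r hr
    have hr : 0 < r := hr
    rw [smul_eq_mul, abs_mul, abs_of_pos (inv_pos.2 hr)]

theorem besov_seminorm_limit_smooth (n : ℕ) (hn : 1 ≤ n) (p : ℝ) (hp : 1 ≤ p)
    (f : EuclideanSpace ℝ (Fin n) → ℝ) (hf : ContDiff ℝ (⊤ : ℕ∞) f)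
    (hsupp : HasCompactSupport f) :
    Tendsto (fun s : ℝ => ENNReal.ofReal (1 - s) *
        ∫⁻ t in Set.Ioi (0 : ℝ),
          ENNReal.ofReal (t ^ (-(s * p / 2 + 1))) *
            ∫⁻ x, ∫⁻ y, ENNReal.ofReal
              ((4 * π * t) ^ (-(n : ℝ) / 2) * Real.exp (-‖x - y‖ ^ 2 / (4 * t)) *
                |f y - f x| ^ p))
      (𝓝[<] (1 : ℝ))
      (𝓝 (ENNReal.ofReal
        (4 * Real.Gamma p / (p * Real.Gamma (p / 2)) * ∫ x, ‖fderiv ℝ f x‖ ^ p))) := by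
  have hp0 : 0 < p := by linarith
  have hf1 : ContDiff ℝ 1 f := hf.of_le (by exact_mod_cast le_top)
  have hfc : Continuous f := hf.continuous
  have hgc := gw_cont n
  obtain ⟨K, hKL⟩ := ContDiff.lipschitzWith_of_hasCompactSupport hsupp hf1 (by norm_num)
  have hK : ∀ x w, |f (x + w) - f x| ≤ K * ‖w‖ := by
    intro x w
    have := hKL.dist_le_mul (x + w) x
    rwa [Real.dist_eq, dist_eq_norm, add_sub_cancel_left] at this
  obtain ⟨M, hM⟩ := hfc.bounded_above_of_compact_support hsupp
  have hM0 : 0 ≤ M := (norm_nonneg _).trans (hM 0)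
  have hM2 : ∀ x w, |f (x + w) - f x| ≤ 2 * M := by
    intro x w
    have h1 := hM (x + w)
    have h2 := hM x
    rw [Real.norm_eq_abs] at h1 h2
    exact (abs_sub _ _).trans (by linarith)
  have hSfin : volume (tsupport f) ≠ ∞ := (IsCompact.measure_lt_top hsupp).ne
  set V : ℝ := (volume (tsupport f)).toReal with hV
  have hVe : (2 * volume (tsupport f) : ℝ≥0∞) = ENNReal.ofReal (2 * V) := by
    rw [ENNReal.ofReal_mul (by norm_num), hV, ENNReal.ofReal_toReal hSfin]; simp
  have hV0 : 0 ≤ V := ENNReal.toReal_nonneg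
  set m : ℝ := ∫ z, gw n z * ‖z‖ ^ p with hm
  have hm0 : 0 ≤ m := integral_nonneg fun z => mul_nonneg (gw_nonneg n z) (by positivity)
  have hmom := gw_moment n hn p hp0.le
  have hme : ∫⁻ z, ENNReal.ofReal (gw n z * ‖z‖ ^ p) = ENNReal.ofReal m :=
    (ofReal_integral_eq_lintegral_ofReal hmom
      (ae_of_all _ fun z => mul_nonneg (gw_nonneg n z) (by positivity))).symm
  -- the limit constant
  have hL : ∫⁻ z, ENNReal.ofReal (gw n z) * ∫⁻ x, ENNReal.ofReal (|fderiv ℝ f x z| ^ p) =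
      ENNReal.ofReal (2 * Real.Gamma p / Real.Gamma (p / 2) * ∫ x, ‖fderiv ℝ f x‖ ^ p) := by
    have hdc : Continuous (fderiv ℝ f) := hf1.continuous_fderiv (by norm_num)
    have hGp : 0 ≤ 2 * Real.Gamma p / Real.Gamma (p / 2) := by
      have := Real.Gamma_pos_of_pos hp0
      have := Real.Gamma_pos_of_pos (half_pos hp0)
      positivity
    have hint : Integrable (fun x => ‖fderiv ℝ f x‖ ^ p) := by
      refine Continuous.integrable_of_hasCompactSupport
        (hdc.norm.rpow_const fun _ => Or.inr hp0.le) ?_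
      refine (hsupp.fderiv (𝕜 := ℝ)).comp_left (g := fun A => ‖A‖ ^ p) ?_
      simp [Real.zero_rpow hp0.ne']
    rw [← integral_const_mul, ofReal_integral_eq_lintegral_ofReal (hint.const_mul _)
      (ae_of_all _ fun x => mul_nonneg hGp (by positivity))]
    simp only [← gw_clm n hn p hp]
    rw [lintegral_lintegral_swap]
    · congr 1
      ext z
      rw [← lintegral_const_mul' _ _ ENNReal.ofReal_ne_top]
      congr 1
      ext x
      rw [ENNReal.ofReal_mul (gw_nonneg n z)]
    · apply Continuous.aemeasurable
      unfold Function.uncurry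
      refine ENNReal.continuous_ofReal.comp ?_
      refine (hgc.comp continuous_snd).mul ?_
      refine Continuous.rpow_const ?_ fun _ => Or.inr hp0.le
      exact ((hdc.comp continuous_fst).clm_apply continuous_snd).abs
  have hconst : ENNReal.ofReal
        (4 * Real.Gamma p / (p * Real.Gamma (p / 2)) * ∫ x, ‖fderiv ℝ f x‖ ^ p) =
      ENNReal.ofReal (2 / p) *
        ∫⁻ z, ENNReal.ofReal (gw n z) * ∫⁻ x, ENNReal.ofReal (|fderiv ℝ f x z| ^ p) := by
    rw [hL, ← ENNReal.ofReal_mul (by positivity)]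
    congr 1
    have := (Real.Gamma_pos_of_pos (half_pos hp0)).ne'
    field_simp
    ring
  rw [hconst]
  have hphiK : ∀ (r : ℝ), 0 < r → ∀ z, ∫⁻ x, ENNReal.ofReal (|f (x + r • z) - f x| ^ p) ≤
      ENNReal.ofReal (2 * V * K ^ p * r ^ p) * ENNReal.ofReal (‖z‖ ^ p) := by
    intro r hr z
    refine (phi_bound hp (r • z) ((K * ‖r • z‖) ^ p) fun x => ?_).trans (le_of_eq ?_)
    · exact Real.rpow_le_rpow (abs_nonneg _) (hK _ _) hp0.le
    · rw [hVe, ← ENNReal.ofReal_mul (by positivity), ← ENNReal.ofReal_mul (by positivity),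
        norm_smul, Real.norm_of_nonneg hr.le, Real.mul_rpow (by positivity) (by positivity),
        Real.mul_rpow (by positivity) (by positivity)]
      congr 1
      ring
  have hphi_meas : ∀ r : ℝ, Measurable fun z => ∫⁻ x, ENNReal.ofReal (|f (x + r • z) - f x| ^ p) := by
    intro r
    refine Measurable.lintegral_prod_right' (f := fun q : EuclideanSpace ℝ (Fin n) ×
      EuclideanSpace ℝ (Fin n) => ENNReal.ofReal (|f (q.2 + r • q.1) - f q.2| ^ p)) ?_
    fun_prop
  have hC1 : 0 ≤ 2 * V * K ^ p * m := by positivity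
  have hC2 : 0 ≤ 2 * V * (2 * M) ^ p := by positivity
  refine abel_limit p hp0 _ ?_ (2 * V * K ^ p * m + 2 * V * (2 * M) ^ p) (by positivity) _ ?_ ?_ ?_
  · refine Measurable.lintegral_prod_right' (f := fun q : ℝ × EuclideanSpace ℝ (Fin n) =>
      ∫⁻ y, ENNReal.ofReal
              ((4 * π * q.1) ^ (-(n : ℝ) / 2) * Real.exp (-‖q.2 - y‖ ^ 2 / (4 * q.1)) *
                |f y - f q.2| ^ p)) ?_
    refine Measurable.lintegral_prod_right' (f := fun q : (ℝ × EuclideanSpace ℝ (Fin n)) ×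
      EuclideanSpace ℝ (Fin n) => ENNReal.ofReal
              ((4 * π * q.1.1) ^ (-(n : ℝ) / 2) * Real.exp (-‖q.1.2 - q.2‖ ^ 2 / (4 * q.1.1)) *
                |f q.2 - f q.1.2| ^ p)) ?_
    fun_prop
  · intro t ht
    rw [heat_swap n p hp f hfc t ht]
    calc _ ≤ ∫⁻ z, ENNReal.ofReal (gw n z) * ENNReal.ofReal (2 * V * (2 * M) ^ p) := by
          refine lintegral_mono fun z => ?_
          simp only
          gcongr
          refine (phi_bound hp (√t • z) ((2 * M) ^ p) fun x => ?_).trans (le_of_eq ?_)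
          · exact Real.rpow_le_rpow (abs_nonneg _) (hM2 _ _) hp0.le
          · rw [hVe, ← ENNReal.ofReal_mul (by positivity)]
      _ = ENNReal.ofReal (2 * V * (2 * M) ^ p) := by
          rw [lintegral_mul_const _ (by fun_prop), gw_total, one_mul]
      _ ≤ _ := ENNReal.ofReal_le_ofReal (by linarith)
  · intro t ht
    have ht0 : 0 < t := ht
    rw [heat_swap n p hp f hfc t ht]
    calc _ ≤ ∫⁻ z, ENNReal.ofReal (2 * V * K ^ p * √t ^ p) *
            ENNReal.ofReal (gw n z * ‖z‖ ^ p) := by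
          refine lintegral_mono fun z => ?_
          rw [ENNReal.ofReal_mul (gw_nonneg n z), mul_left_comm]
          gcongr
          exact hphiK _ (Real.sqrt_pos.2 ht) z
      _ = ENNReal.ofReal (2 * V * K ^ p * m * t ^ (p / 2)) := by
          rw [lintegral_const_mul' _ _ ENNReal.ofReal_ne_top, hme,
            ← ENNReal.ofReal_mul (by positivity), Real.sqrt_eq_rpow, ← Real.rpow_mul ht0.le,
            show 1 / 2 * p = p / 2 by ring]
          congr 1
          ring
      _ ≤ _ := by
          refine ENNReal.ofReal_le_ofReal ?_
          gcongr
          linarith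
  · have hQ : Tendsto (fun r : ℝ => ∫⁻ z, ENNReal.ofReal (gw n z) *
        (ENNReal.ofReal (r ^ (-p)) * ∫⁻ x, ENNReal.ofReal (|f (x + r • z) - f x| ^ p))) (𝓝[>] 0)
        (𝓝 (∫⁻ z, ENNReal.ofReal (gw n z) * ∫⁻ x, ENNReal.ofReal (|fderiv ℝ f x z| ^ p))) := by
      refine tendsto_lintegral_filter_of_dominated_convergence
        (fun z => ENNReal.ofReal (2 * V * K ^ p) * ENNReal.ofReal (gw n z * ‖z‖ ^ p)) ?_ ?_ ?_ ?_
      · refine Eventually.of_forall fun r => ?_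
        have := hphi_meas r
        fun_prop
      · filter_upwards [self_mem_nhdsWithin] with r hr
        have hr : 0 < r := hr
        refine ae_of_all _ fun z => ?_
        calc _ ≤ ENNReal.ofReal (gw n z) * (ENNReal.ofReal (r ^ (-p)) *
              (ENNReal.ofReal (2 * V * K ^ p * r ^ p) * ENNReal.ofReal (‖z‖ ^ p))) := by
              gcongr
              exact hphiK r hr z
          _ = _ := by
              have hg := gw_nonneg n z
              rw [← ENNReal.ofReal_mul (by positivity), ← ENNReal.ofReal_mul (by positivity),
                ← ENNReal.ofReal_mul (by positivity), ← ENNReal.ofReal_mul (by positivity)]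
              congr 1
              rw [Real.rpow_neg hr.le]
              field_simp
      · rw [lintegral_const_mul' _ _ ENNReal.ofReal_ne_top, hme]
        exact ENNReal.mul_ne_top ENNReal.ofReal_ne_top ENNReal.ofReal_ne_top
      · refine ae_of_all _ fun z => ?_
        refine ENNReal.Tendsto.const_mul ?_ (Or.inr ENNReal.ofReal_ne_top)
        refine Tendsto.congr' ?_ (phi_lim hp hf1 hsupp K K.2 hK z)
        filter_upwards [self_mem_nhdsWithin] with r hr
        have hr : 0 < r := hr
        rw [← lintegral_const_mul' _ _ ENNReal.ofReal_ne_top]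
        congr 1
        ext x
        rw [← ENNReal.ofReal_mul (by positivity), Real.mul_rpow (by positivity) (by positivity),
          Real.inv_rpow hr.le, Real.rpow_neg hr.le]
    have hs : Tendsto (fun t : ℝ => √t) (𝓝[>] 0) (𝓝[>] 0) := by
      refine tendsto_nhdsWithin_iff.2 ⟨?_, ?_⟩
      · have := (Real.continuous_sqrt.tendsto 0).mono_left (nhdsWithin_le_nhds (s := Set.Ioi 0))
        rwa [Real.sqrt_zero] at this
      · filter_upwards [self_mem_nhdsWithin] with t ht using Real.sqrt_pos.2 ht
    refine Tendsto.congr' ?_ (hQ.comp hs)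
    filter_upwards [self_mem_nhdsWithin] with t ht
    have ht0 : 0 < t := ht
    rw [heat_swap n p hp f hfc t ht, Function.comp,
      ← lintegral_const_mul' _ _ ENNReal.ofReal_ne_top]
    congr 1
    ext z
    rw [mul_left_comm, Real.sqrt_eq_rpow, ← Real.rpow_mul ht0.le,
      show 1 / 2 * (-p) = -(p / 2) by ring]
end

section
/- Let n ≥ 1, 1 ≤ p < ∞, and let f : ℝⁿ → ℝ be smooth with compact support. Then lim_{s → 1⁻} (1−s) ∫_{ℝⁿ} ∫_{ℝⁿ} |f(x) − f(y)|^p / ‖x−y‖^{n+sp} dy dx = (2 π^{(n-1)/2} Γ((p+1)/2) / (p Γ((n+p)/2))) ∫_{ℝⁿ} ‖∇f(x)‖^p dx. -/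
open Real MeasureTheory Filter Topology
open scoped ENNReal

lemma bbm_polar {n : ℕ} (hn : 1 ≤ n) (g : EuclideanSpace ℝ (Fin n) → ℝ≥0∞) (hg : Measurable g) :
    ∫⁻ x, g x = ∫⁻ ω, (∫⁻ r in Set.Ioi (0 : ℝ), ENNReal.ofReal (r ^ (n - 1)) *
      g (r • (ω : EuclideanSpace ℝ (Fin n))))
      ∂((volume : Measure (EuclideanSpace ℝ (Fin n))).toSphere) := by
  have : Nonempty (Fin n) := ⟨⟨0, hn⟩⟩
  have hmeas : Measurable (fun q : Metric.sphere (0 : EuclideanSpace ℝ (Fin n)) 1 × Set.Ioi (0 : ℝ) =>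
      g ((q.2 : ℝ) • (q.1 : EuclideanSpace ℝ (Fin n)))) := by
    apply hg.comp; fun_prop
  calc ∫⁻ x, g x = ∫⁻ x : ({(0)}ᶜ : Set (EuclideanSpace ℝ (Fin n))), g x.1
        ∂((volume : Measure (EuclideanSpace ℝ (Fin n))).comap (↑)) := by
        rw [lintegral_subtype_comap (measurableSet_singleton _).compl fun x ↦ g x,
          restrict_compl_singleton]
    _ = ∫⁻ q, g ((q.2 : ℝ) • (q.1 : EuclideanSpace ℝ (Fin n)))
        ∂((volume : Measure (EuclideanSpace ℝ (Fin n))).toSphere.prod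
          (.volumeIoiPow (Module.finrank ℝ (EuclideanSpace ℝ (Fin n)) - 1))) := by
        rw [← (Measure.measurePreserving_homeomorphUnitSphereProd
          (volume : Measure (EuclideanSpace ℝ (Fin n)))).lintegral_comp hmeas]
        apply lintegral_congr
        intro x
        congr 1
        have h0 : ‖x.1‖ ≠ 0 := norm_ne_zero_iff.2 x.2
        simp [smul_smul, h0]
    _ = _ := by
        rw [lintegral_prod _ hmeas.aemeasurable]
        apply lintegral_congr
        intro ω
        have h1 : Measurable (fun r : ℝ => g (r • (ω : EuclideanSpace ℝ (Fin n)))) := by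
          apply hg.comp; fun_prop
        have h2 := lintegral_withDensity_eq_lintegral_mul
          (Measure.comap (Subtype.val : Set.Ioi (0 : ℝ) → ℝ) volume)
          (f := fun r => ENNReal.ofReal (r.1 ^ (n - 1))) (by fun_prop)
          (h1.comp measurable_subtype_coe)
        rw [Measure.volumeIoiPow, ← lintegral_subtype_comap measurableSet_Ioi]
        simpa using h2

lemma bbm_gamma1 {q : ℝ} (hq : -1 < q) :
    ∫⁻ r in Set.Ioi (0 : ℝ), ENNReal.ofReal (r ^ q * exp (-r ^ 2)) =
      ENNReal.ofReal (Real.Gamma ((q + 1) / 2) / 2) := by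
  have h := integral_rpow_mul_exp_neg_rpow (p := 2) (by norm_num) hq
  have hi := integrableOn_rpow_mul_exp_neg_rpow (s := q) (p := 2) hq (by norm_num)
  simp only [Real.rpow_two] at h hi
  rw [← ofReal_integral_eq_lintegral_ofReal hi, h]
  · congr 1; ring
  · filter_upwards [ae_restrict_mem measurableSet_Ioi] with r hr
    have : (0 : ℝ) < r := hr
    simp only [Pi.zero_apply]; positivity

lemma bbm_gamma2 {q : ℝ} (hq : -1 < q) :
    ∫ r : ℝ, |r| ^ q * exp (-r ^ 2) = Real.Gamma ((q + 1) / 2) := by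
  have h := integral_rpow_mul_exp_neg_rpow (p := 2) (by norm_num) hq
  simp only [Real.rpow_two] at h
  have := integral_comp_abs (f := fun r : ℝ => r ^ q * exp (-r ^ 2))
  simp only [sq_abs] at this
  rw [this, h]; ring

lemma bbm_int2 {q : ℝ} (hq : -1 < q) :
    Integrable (fun r : ℝ => |r| ^ q * exp (-r ^ 2)) := by
  by_contra h
  have h1 := integral_undef h
  rw [bbm_gamma2 hq] at h1
  exact (Real.Gamma_pos_of_pos (by linarith)).ne' h1

lemma bbm_gauss0 {n : ℕ} (hn : 1 ≤ n) {p : ℝ} (hp : 0 ≤ p) :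
    ∫⁻ h : EuclideanSpace ℝ (Fin n), ENNReal.ofReal (|h ⟨0, hn⟩| ^ p * exp (-‖h‖ ^ 2)) =
      ENNReal.ofReal (π ^ (((n : ℝ) - 1) / 2) * Real.Gamma ((p + 1) / 2)) := by
  let F : Fin n → ℝ → ℝ := fun i r => if i = ⟨0, hn⟩ then |r| ^ p * exp (-r ^ 2) else exp (-r ^ 2)
  have hF0 : ∀ i r, 0 ≤ F i r := by
    intro i r; simp only [F]; split_ifs <;> positivity
  have hFi : ∀ i, Integrable (F i) := by
    intro i
    by_cases hi : i = ⟨0, hn⟩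
    · simp only [F, hi, if_true]; exact bbm_int2 (by linarith)
    · simp only [F, hi, if_false]
      simpa using bbm_int2 (q := 0) (by norm_num)
  have key : ∀ x : Fin n → ℝ, |x ⟨0, hn⟩| ^ p * exp (-‖(WithLp.toLp 2 x : EuclideanSpace ℝ (Fin n))‖ ^ 2)
      = ∏ i, F i (x i) := by
    intro x
    rw [EuclideanSpace.norm_sq_eq, ← Finset.sum_neg_distrib, Real.exp_sum]
    have : ∀ i, F i (x i) = (if i = ⟨0, hn⟩ then |x i| ^ p else 1) * exp (-x i ^ 2) := by
      intro i; simp only [F]; split_ifs <;> simp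
    simp_rw [this]
    rw [Finset.prod_mul_distrib, Finset.prod_ite_eq' Finset.univ]
    simp
  rw [← (PiLp.volume_preserving_toLp (Fin n)).lintegral_comp (by fun_prop)]
  simp only [key]
  rw [← ofReal_integral_eq_lintegral_ofReal, integral_fintype_prod_volume_eq_prod]
  · congr 1
    have h2 : ∀ i, ∫ r, F i r = if i = ⟨0, hn⟩ then Real.Gamma ((p + 1) / 2) else π ^ (1 / 2 : ℝ) := by
      intro i
      simp only [F]
      split_ifs
      · exact bbm_gamma2 (by linarith)
      · have := integral_gaussian 1
        simpa [Real.sqrt_eq_rpow] using this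
    simp_rw [h2]
    rw [← Finset.mul_prod_erase Finset.univ _ (Finset.mem_univ (⟨0, hn⟩ : Fin n))]
    rw [Finset.prod_congr rfl (g := fun _ => π ^ (1 / 2 : ℝ)) (by
      intro i hi; simp [(Finset.mem_erase.1 hi).1])]
    rw [Finset.prod_const, Finset.card_erase_of_mem (Finset.mem_univ _)]
    rw [← Real.rpow_natCast, ← Real.rpow_mul pi_pos.le]
    simp only [if_true, Finset.card_univ, Fintype.card_fin]
    rw [Nat.cast_sub hn, mul_comm]
    congr 2; push_cast; ring
  · exact Integrable.fintype_prod hFi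
  · exact Eventually.of_forall fun x => Finset.prod_nonneg fun i _ => hF0 _ _

lemma bbm_gauss {n : ℕ} (hn : 1 ≤ n) {p : ℝ} (hp : 0 < p) (v : EuclideanSpace ℝ (Fin n) →L[ℝ] ℝ) :
    ∫⁻ h : EuclideanSpace ℝ (Fin n), ENNReal.ofReal (|v h| ^ p * exp (-‖h‖ ^ 2)) =
      ENNReal.ofReal (‖v‖ ^ p) *
      ENNReal.ofReal (π ^ (((n : ℝ) - 1) / 2) * Real.Gamma ((p + 1) / 2)) := by
  let w := (InnerProductSpace.toDual ℝ (EuclideanSpace ℝ (Fin n))).symm v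
  have hw : ∀ h, v h = inner ℝ w h := by
    intro h; simp [w]
  have hwn : ‖v‖ = ‖w‖ := by simp [w]
  let e : EuclideanSpace ℝ (Fin n) := EuclideanSpace.single ⟨0, hn⟩ ‖w‖
  have he : ‖w‖ = ‖e‖ := by simp [e]
  let R := (Submodule.span ℝ {w - e})ᗮ.reflection
  have hR : R w = e := Submodule.reflection_sub he
  rw [← bbm_gauss0 hn hp.le, ← lintegral_const_mul _ (by fun_prop),
    ← (R.measurePreserving).lintegral_comp (by fun_prop)]
  apply lintegral_congr
  intro h
  rw [← ENNReal.ofReal_mul (by positivity), ← mul_assoc, ← Real.mul_rpow (by positivity) (by positivity)]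
  have : |v (R h)| = ‖v‖ * |h ⟨0, hn⟩| := by
    rw [hw, ← R.inner_map_map, hR, hwn, Submodule.reflection_reflection]
    simp [e, EuclideanSpace.inner_single_left, abs_mul]
  rw [this, R.norm_map]

noncomputable def bbmK (n : ℕ) (p : ℝ) : ℝ := 2 * π ^ (((n : ℝ) - 1) / 2) * Real.Gamma ((p + 1) / 2) /
            (Real.Gamma (((n : ℝ) + p) / 2))

lemma bbm_sphere {n : ℕ} (hn : 1 ≤ n) {p : ℝ} (hp : 0 < p) (v : EuclideanSpace ℝ (Fin n) →L[ℝ] ℝ) :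
    ∫⁻ ω : Metric.sphere (0 : EuclideanSpace ℝ (Fin n)) 1, ENNReal.ofReal (|v ω| ^ p)
      ∂((volume : Measure (EuclideanSpace ℝ (Fin n))).toSphere) =
    ENNReal.ofReal (bbmK n p) * ENNReal.ofReal (‖v‖ ^ p) := by
  have h1 := bbm_gauss hn hp v
  rw [bbm_polar hn _ (by fun_prop)] at h1
  have hn' : (1 : ℝ) ≤ n := by exact_mod_cast hn
  have hG : 0 < Real.Gamma (((n : ℝ) + p) / 2) := Real.Gamma_pos_of_pos (by linarith)
  have h2 : ∀ ω : Metric.sphere (0 : EuclideanSpace ℝ (Fin n)) 1,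
      (∫⁻ r in Set.Ioi (0 : ℝ), ENNReal.ofReal (r ^ (n - 1)) *
        ENNReal.ofReal (|v (r • (ω : EuclideanSpace ℝ (Fin n)))| ^ p *
          exp (-‖r • (ω : EuclideanSpace ℝ (Fin n))‖ ^ 2))) =
      ENNReal.ofReal (|v ω| ^ p) * ENNReal.ofReal (Real.Gamma (((n : ℝ) + p) / 2) / 2) := by
    intro ω
    have h3 := bbm_gamma1 (q := n - 1 + p) (by linarith)
    rw [show ((n : ℝ) - 1 + p + 1) = n + p by ring] at h3
    rw [← h3, ← lintegral_const_mul _ (by fun_prop)]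
    apply setLIntegral_congr_fun measurableSet_Ioi
    intro r hr
    have hr : 0 < r := hr
    have hω : ‖(ω : EuclideanSpace ℝ (Fin n))‖ = 1 := by simp
    simp only
    rw [← ENNReal.ofReal_mul (by positivity), ← ENNReal.ofReal_mul (by positivity)]
    congr 1
    rw [norm_smul, hω, map_smul, smul_eq_mul, abs_mul, Real.mul_rpow (by positivity) (by positivity),
      abs_of_pos hr, Real.rpow_add hr, ← Real.rpow_natCast r (n - 1), Nat.cast_sub hn]
    simp [abs_of_pos hr]
    ring
  simp_rw [h2] at h1
  rw [lintegral_mul_const _ (by fun_prop)] at h1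
  rw [mul_comm] at h1
  have hne : ENNReal.ofReal (Real.Gamma (((n : ℝ) + p) / 2) / 2) ≠ 0 := by
    simp; positivity
  have h5 : ENNReal.ofReal (π ^ (((n : ℝ) - 1) / 2) * Real.Gamma ((p + 1) / 2)) =
      ENNReal.ofReal (Real.Gamma (((n : ℝ) + p) / 2) / 2) * ENNReal.ofReal (bbmK n p) := by
    rw [← ENNReal.ofReal_mul (by positivity)]
    congr 1
    unfold bbmK
    field_simp
  rw [h5, mul_comm (ENNReal.ofReal (‖v‖ ^ p)), mul_assoc] at h1
  exact (ENNReal.mul_right_inj hne ENNReal.ofReal_ne_top).1 h1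

lemma bbm_peak {p : ℝ} (hp : 0 < p) {g : ℝ → ℝ} {A : ℝ} (hg : IntegrableOn g (Set.Ioc 0 1))
    (hA : Tendsto g (𝓝[>] 0) (𝓝 A)) :
    Tendsto (fun s : ℝ => ∫ r in Set.Ioc (0 : ℝ) 1, (p * (1 - s) * r ^ (p * (1 - s) - 1)) • g r)
      (𝓝[<] 1) (𝓝 A) := by
  have hs1 : ∀ᶠ s : ℝ in 𝓝[<] 1, s < 1 := eventually_mem_nhdsWithin
  apply tendsto_setIntegral_peak_smul_of_integrableOn_of_tendsto (x₀ := 0) measurableSet_Ioc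
    (t := Set.Ioc 0 1) measurableSet_Ioc le_rfl self_mem_nhdsWithin
  · simp
  · filter_upwards [hs1] with s hs r hr
    have : 0 < r := hr.1
    have : 0 < 1 - s := by linarith
    positivity
  · intro u hu h0
    obtain ⟨δ, hδ, hδu⟩ := Metric.isOpen_iff.1 hu 0 h0
    rw [Metric.tendstoUniformlyOn_iff]
    intro ε hε
    have hlim : Tendsto (fun s : ℝ => p * (1 - s) * δ⁻¹) (𝓝[<] 1) (𝓝 0) := by
      have : Tendsto (fun s : ℝ => p * (1 - s) * δ⁻¹) (𝓝 1) (𝓝 (p * (1 - 1) * δ⁻¹)) :=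
        Continuous.tendsto (by fun_prop) 1
      simp only [sub_self, mul_zero, zero_mul] at this
      exact this.mono_left nhdsWithin_le_nhds
    filter_upwards [hs1, hlim.eventually_lt_const hε] with s hs hlt r hr
    have hr0 : 0 < r := hr.1.1
    have h1s : 0 < 1 - s := by linarith
    have hδr : δ ≤ r := by
      by_contra hcon
      apply hr.2; apply hδu
      simp [abs_of_pos hr0]; linarith
    have hle : r ^ (p * (1 - s) - 1) ≤ δ⁻¹ := by
      rw [Real.rpow_sub_one hr0.ne', div_eq_mul_inv]
      calc _ ≤ 1 * r⁻¹ := by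
            gcongr
            exact Real.rpow_le_one hr0.le hr.1.2 (by positivity)
        _ ≤ _ := by rw [one_mul]; gcongr
    simp only [Pi.zero_apply, dist_zero_left, Real.norm_eq_abs]
    rw [abs_of_nonneg (by positivity)]
    refine lt_of_le_of_lt ?_ hlt
    gcongr
  · apply tendsto_const_nhds.congr'
    filter_upwards [hs1] with s hs
    have h1s : 0 < p * (1 - s) := mul_pos hp (by linarith)
    rw [integral_const_mul, ← intervalIntegral.integral_of_le zero_le_one,
      integral_rpow (Or.inl (by linarith))]
    have h3 : 1 - s ≠ 0 := by linarith
    simp [h1s.ne']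
    field_simp
  · refine Eventually.of_forall fun s => ?_
    apply Measurable.aestronglyMeasurable
    fun_prop
  · exact hg
  · exact hA.mono_left (nhdsWithin_mono _ fun x hx => hx.1)

lemma bbm_1d {p : ℝ} (hp : 0 < p) {G : ℝ → ℝ≥0∞} (hG : Measurable G) {C A : ℝ≥0∞} (hC : C ≠ ⊤)
    (hA : A ≠ ⊤) (h1 : ∀ r, 0 < r → G r ≤ C)
    (h2 : ∀ r, 0 < r → r ≤ 1 → G r / ENNReal.ofReal (r ^ p) ≤ C)
    (hlim : Tendsto (fun r => G r / ENNReal.ofReal (r ^ p)) (𝓝[>] 0) (𝓝 A)) :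
    Tendsto (fun s : ℝ => ENNReal.ofReal (1 - s) *
      ∫⁻ r in Set.Ioi (0 : ℝ), ENNReal.ofReal (r ^ (-1 - s * p)) * G r) (𝓝[<] 1)
      (𝓝 (ENNReal.ofReal p⁻¹ * A)) := by
  have hs1 : ∀ᶠ s : ℝ in 𝓝[<] 1, s < 1 := eventually_mem_nhdsWithin
  have hs2 : ∀ᶠ s : ℝ in 𝓝[<] 1, 1 / 2 < s :=
    (eventually_gt_nhds (by norm_num)).filter_mono nhdsWithin_le_nhds
  have hsplit : ∀ s : ℝ, ENNReal.ofReal (1 - s) *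
      ∫⁻ r in Set.Ioi (0 : ℝ), ENNReal.ofReal (r ^ (-1 - s * p)) * G r =
      ENNReal.ofReal (1 - s) * (∫⁻ r in Set.Ioc (0 : ℝ) 1, ENNReal.ofReal (r ^ (-1 - s * p)) * G r) +
      ENNReal.ofReal (1 - s) * (∫⁻ r in Set.Ioi (1 : ℝ), ENNReal.ofReal (r ^ (-1 - s * p)) * G r) := by
    intro s
    rw [← mul_add, ← lintegral_union measurableSet_Ioi, Set.Ioc_union_Ioi_eq_Ioi zero_le_one]
    rw [Set.disjoint_left]
    intro x hx hx'
    exact absurd hx.2 (not_le.2 hx')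
  simp_rw [hsplit]
  rw [← add_zero (ENNReal.ofReal p⁻¹ * A)]
  have h1s : Tendsto (fun s : ℝ => ENNReal.ofReal (1 - s)) (𝓝[<] 1) (𝓝 0) := by
    have : Tendsto (fun s : ℝ => ENNReal.ofReal (1 - s)) (𝓝 1) (𝓝 (ENNReal.ofReal (1 - 1))) :=
      Continuous.tendsto (ENNReal.continuous_ofReal.comp (by fun_prop)) 1
    simp only [sub_self, ENNReal.ofReal_zero] at this
    exact this.mono_left nhdsWithin_le_nhds
  apply Tendsto.add
  · let g : ℝ → ℝ := fun r => (G r / ENNReal.ofReal (r ^ p)).toReal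
    have hgm : Measurable g := by fun_prop
    have hgA : Tendsto g (𝓝[>] 0) (𝓝 A.toReal) :=
      (ENNReal.tendsto_toReal hA).comp hlim
    have hg0 : ∀ r, 0 ≤ g r := fun r => ENNReal.toReal_nonneg
    have hgC : ∀ r ∈ Set.Ioc (0 : ℝ) 1, g r ≤ C.toReal := fun r hr =>
      ENNReal.toReal_mono hC (h2 r hr.1 hr.2)
    have hgi : IntegrableOn g (Set.Ioc 0 1) := by
      apply Measure.integrableOn_of_bounded (M := C.toReal)
      · simp
      · exact hgm.aestronglyMeasurable
      · filter_upwards [ae_restrict_mem measurableSet_Ioc] with r hr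
        rw [Real.norm_of_nonneg (hg0 r)]
        exact hgC r hr
    have hpk := bbm_peak hp hgi hgA
    have hpk2 := (ENNReal.tendsto_ofReal (hpk.const_mul p⁻¹))
    rw [ENNReal.ofReal_mul (by positivity), ENNReal.ofReal_toReal hA] at hpk2
    refine hpk2.congr' ?_
    filter_upwards [hs1] with s hs
    have h1s : 0 < 1 - s := by linarith
    have hps : 0 < p * (1 - s) := mul_pos hp (by linarith)
    rw [← lintegral_const_mul _ (by fun_prop), ← integral_const_mul,
      ofReal_integral_eq_lintegral_ofReal]
    · apply setLIntegral_congr_fun measurableSet_Ioc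
      intro r hr
      have hr0 : 0 < r := hr.1
      have hGr : G r = ENNReal.ofReal (r ^ p) * ENNReal.ofReal (g r) := by
        simp only [g]
        rw [ENNReal.ofReal_toReal (ne_top_of_le_ne_top hC (h2 r hr.1 hr.2)), ENNReal.mul_div_cancel]
        · simp; positivity
        · simp
      simp only
      rw [hGr, ← ENNReal.ofReal_mul (by positivity), ← ENNReal.ofReal_mul (by positivity),
        ← ENNReal.ofReal_mul (by positivity)]
      congr 1
      have : r ^ (p * (1 - s) - 1) = r ^ (-1 - s * p) * r ^ p := by
        rw [← Real.rpow_add hr0]; congr 1; ring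
      rw [this, smul_eq_mul]
      field_simp
    · apply Integrable.const_mul
      apply Integrable.mul_bdd (c := C.toReal)
      · apply Integrable.const_mul
        have := (intervalIntegral.intervalIntegrable_rpow' (a := 0) (b := 1)
          (r := p * (1 - s) - 1) (by linarith)).1
        exact this
      · exact hgm.aestronglyMeasurable
      · filter_upwards [ae_restrict_mem measurableSet_Ioc] with r hr
        rw [Real.norm_of_nonneg (hg0 r)]
        exact hgC r hr
    · filter_upwards [ae_restrict_mem measurableSet_Ioc] with r hr
      have hr0 : 0 < r := hr.1
      have := hg0 r
      simp only [Pi.zero_apply, smul_eq_mul]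
      positivity
  · have hD : ∫⁻ r in Set.Ioi (1 : ℝ), ENNReal.ofReal (r ^ (-1 - p / 2)) ≠ ⊤ := by
      have := integrableOn_Ioi_rpow_of_lt (a := -1 - p / 2) (by linarith) (zero_lt_one)
      exact this.lintegral_lt_top.ne
    have hle : ∀ᶠ s : ℝ in 𝓝[<] 1, ENNReal.ofReal (1 - s) * (∫⁻ r in Set.Ioi (1 : ℝ), ENNReal.ofReal (r ^ (-1 - s * p)) * G r)
      ≤ ENNReal.ofReal (1 - s) * ((∫⁻ r in Set.Ioi (1 : ℝ), ENNReal.ofReal (r ^ (-1 - p / 2))) * C) := by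
      filter_upwards [hs2] with s hs
      gcongr
      rw [← lintegral_mul_const _ (by fun_prop)]
      apply setLIntegral_mono (by fun_prop)
      intro r hr
      have hr : (1 : ℝ) < r := hr
      gcongr
      · exact hr.le
      · nlinarith
      · exact h1 r (by linarith)
    have hup : Tendsto (fun s : ℝ => ENNReal.ofReal (1 - s) * ((∫⁻ r in Set.Ioi (1 : ℝ), ENNReal.ofReal (r ^ (-1 - p / 2))) * C)) (𝓝[<] 1) (𝓝 0) := by
      have := ENNReal.Tendsto.mul_const (b := (∫⁻ r in Set.Ioi (1 : ℝ), ENNReal.ofReal (r ^ (-1 - p / 2))) * C) h1s (Or.inr (ENNReal.mul_ne_top hD hC))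
      simpa using this
    exact tendsto_of_tendsto_of_tendsto_of_le_of_le' tendsto_const_nhds hup
      (Eventually.of_forall fun _ => zero_le) hle

set_option maxHeartbeats 1000000 in
lemma bbm_reduce {n : ℕ} (hn : 1 ≤ n) {p : ℝ} {f : EuclideanSpace ℝ (Fin n) → ℝ}
    (hf : Continuous f) (s : ℝ) :
    ∫⁻ x, ∫⁻ y, ENNReal.ofReal (|f x - f y| ^ p / ‖x - y‖ ^ ((n : ℝ) + s * p)) =
    ∫⁻ r in Set.Ioi (0 : ℝ), ENNReal.ofReal (r ^ (-1 - s * p)) *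
      ∫⁻ q : Metric.sphere (0 : EuclideanSpace ℝ (Fin n)) 1 × EuclideanSpace ℝ (Fin n),
        ENNReal.ofReal (|f (q.2 + r • (q.1 : EuclideanSpace ℝ (Fin n))) - f q.2| ^ p)
        ∂((volume : Measure (EuclideanSpace ℝ (Fin n))).toSphere.prod volume) := by
  have hfm := hf.measurable
  calc _ = ∫⁻ x, ∫⁻ h, ENNReal.ofReal (|f (x + h) - f x| ^ p / ‖h‖ ^ ((n : ℝ) + s * p)) := by
        apply lintegral_congr; intro x
        rw [← lintegral_add_left_eq_self _ x]
        apply lintegral_congr; intro h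
        rw [abs_sub_comm, ← norm_neg]
        simp
    _ = ∫⁻ h, ∫⁻ x, ENNReal.ofReal (|f (x + h) - f x| ^ p / ‖h‖ ^ ((n : ℝ) + s * p)) := by
        apply lintegral_lintegral_swap
        apply Measurable.aemeasurable
        fun_prop
    _ = _ := by
        rw [bbm_polar hn]
        swap
        · apply Measurable.lintegral_prod_right'
            (f := fun z : EuclideanSpace ℝ (Fin n) × EuclideanSpace ℝ (Fin n) =>
              ENNReal.ofReal (|f (z.2 + z.1) - f z.2| ^ p / ‖z.1‖ ^ ((n : ℝ) + s * p)))
          fun_prop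
        have hm1 : Measurable (fun z : (Metric.sphere (0 : EuclideanSpace ℝ (Fin n)) 1 × ℝ) =>
            ∫⁻ x, ENNReal.ofReal (|f (x + z.2 • (z.1 : EuclideanSpace ℝ (Fin n))) - f x| ^ p)) := by
          apply Measurable.lintegral_prod_right'
            (f := fun w : (Metric.sphere (0 : EuclideanSpace ℝ (Fin n)) 1 × ℝ) × EuclideanSpace ℝ (Fin n) =>
              ENNReal.ofReal (|f (w.2 + w.1.2 • (w.1.1 : EuclideanSpace ℝ (Fin n))) - f w.2| ^ p))
          fun_prop
        have h1 : ∀ ω : Metric.sphere (0 : EuclideanSpace ℝ (Fin n)) 1,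
            (∫⁻ r in Set.Ioi (0 : ℝ), ENNReal.ofReal (r ^ (n - 1)) *
              ∫⁻ x, ENNReal.ofReal (|f (x + r • (ω : EuclideanSpace ℝ (Fin n))) - f x| ^ p /
                ‖r • (ω : EuclideanSpace ℝ (Fin n))‖ ^ ((n : ℝ) + s * p))) =
            ∫⁻ r in Set.Ioi (0 : ℝ), ENNReal.ofReal (r ^ (-1 - s * p)) *
              ∫⁻ x, ENNReal.ofReal (|f (x + r • (ω : EuclideanSpace ℝ (Fin n))) - f x| ^ p) := by
          intro ω
          apply setLIntegral_congr_fun measurableSet_Ioi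
          intro r hr
          have hr : 0 < r := hr
          have hω : ‖(ω : EuclideanSpace ℝ (Fin n))‖ = 1 := by simp
          simp only
          rw [← lintegral_const_mul _ (by fun_prop), ← lintegral_const_mul _ (by fun_prop)]
          apply lintegral_congr
          intro x
          rw [← ENNReal.ofReal_mul (by positivity), ← ENNReal.ofReal_mul (by positivity)]
          congr 1
          rw [norm_smul, hω, mul_one, Real.norm_of_nonneg hr.le, ← Real.rpow_natCast r (n - 1),
            Nat.cast_sub hn]
          have : r ^ (-1 - s * p) = r ^ ((n : ℝ) - (1 : ℕ)) / r ^ ((n : ℝ) + s * p) := by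
            rw [← Real.rpow_sub hr]; congr 1; push_cast; ring
          rw [this]; ring
        simp_rw [h1]
        rw [lintegral_lintegral_swap]
        · apply lintegral_congr
          intro r
          have h3 : Measurable (fun ω : Metric.sphere (0 : EuclideanSpace ℝ (Fin n)) 1 =>
            ∫⁻ x, ENNReal.ofReal (|f (x + r • (ω : EuclideanSpace ℝ (Fin n))) - f x| ^ p)) := by
            apply Measurable.lintegral_prod_right'
              (f := fun w : Metric.sphere (0 : EuclideanSpace ℝ (Fin n)) 1 × EuclideanSpace ℝ (Fin n) =>
                ENNReal.ofReal (|f (w.2 + r • (w.1 : EuclideanSpace ℝ (Fin n))) - f w.2| ^ p))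
            fun_prop
          rw [lintegral_const_mul _ h3, lintegral_prod]
          apply Measurable.aemeasurable
          fun_prop
        · apply Measurable.aemeasurable
          exact Measurable.mul (by fun_prop) hm1

set_option maxHeartbeats 1000000 in
theorem bbm_limit_gagliardo_smooth (n : ℕ) (hn : 1 ≤ n) (p : ℝ) (hp : 1 ≤ p)
    (f : EuclideanSpace ℝ (Fin n) → ℝ) (hf : ContDiff ℝ (⊤ : ℕ∞) f)
    (hsupp : HasCompactSupport f) :
    Tendsto (fun s : ℝ => ENNReal.ofReal (1 - s) *
        ∫⁻ x, ∫⁻ y, ENNReal.ofReal (|f x - f y| ^ p / ‖x - y‖ ^ ((n : ℝ) + s * p)))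
      (𝓝[<] (1 : ℝ))
      (𝓝 (ENNReal.ofReal
        (2 * π ^ (((n : ℝ) - 1) / 2) * Real.Gamma ((p + 1) / 2) /
            (p * Real.Gamma (((n : ℝ) + p) / 2)) *
          ∫ x, ‖fderiv ℝ f x‖ ^ p))) := by
  have hp0 : 0 < p := by linarith
  have hn' : (1 : ℝ) ≤ n := by exact_mod_cast hn
  have hfc := hf.continuous
  have hfm := hfc.measurable
  have hdc : Continuous (fderiv ℝ f) := hf.continuous_fderiv (by simp)
  simp_rw [bbm_reduce hn hfc]
  set σ := (volume : Measure (EuclideanSpace ℝ (Fin n))).toSphere with hσ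
  have hσf : IsFiniteMeasure σ := by rw [hσ]; infer_instance
  set G : ℝ → ℝ≥0∞ := fun r =>
      ∫⁻ q : Metric.sphere (0 : EuclideanSpace ℝ (Fin n)) 1 × EuclideanSpace ℝ (Fin n),
        ENNReal.ofReal (|f (q.2 + r • (q.1 : EuclideanSpace ℝ (Fin n))) - f q.2| ^ p)
        ∂(σ.prod volume) with hGdef
  have hGm : Measurable G := by
    apply Measurable.lintegral_prod_right'
      (f := fun w : ℝ × (Metric.sphere (0 : EuclideanSpace ℝ (Fin n)) 1 × EuclideanSpace ℝ (Fin n)) =>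
        ENNReal.ofReal (|f (w.2.2 + w.1 • (w.2.1 : EuclideanSpace ℝ (Fin n))) - f w.2.2| ^ p))
    fun_prop
  -- constants
  obtain ⟨R, hR⟩ : ∃ R : ℝ, ∀ x, R < ‖x‖ → f x = 0 := by
    obtain ⟨R, hR⟩ := hsupp.isCompact.isBounded.subset_closedBall 0
    refine ⟨R, fun x hx => ?_⟩
    by_contra h
    have := hR (subset_tsupport f h)
    simp at this
    linarith
  obtain ⟨M, hM⟩ := hsupp.exists_bound_of_continuous hfc
  obtain ⟨L, hL⟩ := hf.lipschitzWith_of_hasCompactSupport hsupp (by simp)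
  have hM0 : 0 ≤ M := (norm_nonneg _).trans (hM 0)
  set A : ℝ≥0∞ := ENNReal.ofReal (bbmK n p) * ENNReal.ofReal (∫ x, ‖fderiv ℝ f x‖ ^ p) with hAdef
  have hA : A ≠ ⊤ := ENNReal.mul_ne_top ENNReal.ofReal_ne_top ENNReal.ofReal_ne_top
  let B : Set (EuclideanSpace ℝ (Fin n)) := Metric.closedBall 0 R
  let B' : Set (EuclideanSpace ℝ (Fin n)) := Metric.closedBall 0 (R + 1)
  have hBm : MeasurableSet B := measurableSet_closedBall
  have hBm' : MeasurableSet B' := measurableSet_closedBall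
  let C1 : ℝ≥0∞ := ENNReal.ofReal ((2 * M) ^ p) * (volume B + volume B) * σ Set.univ
  have hC1 : C1 ≠ ⊤ := by
    refine ENNReal.mul_ne_top (ENNReal.mul_ne_top ENNReal.ofReal_ne_top ?_) (measure_ne_top _ _)
    simp [B, measure_closedBall_lt_top.ne]
  let bd : Metric.sphere (0 : EuclideanSpace ℝ (Fin n)) 1 × EuclideanSpace ℝ (Fin n) → ℝ≥0∞ :=
    fun q => B'.indicator (fun _ => ENNReal.ofReal ((L : ℝ) ^ p)) q.2
  let C2 : ℝ≥0∞ := ∫⁻ q, bd q ∂(σ.prod volume)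
  have hC2 : C2 ≠ ⊤ := by
    simp only [C2, bd]
    rw [lintegral_prod _ (by
      apply Measurable.aemeasurable
      exact (measurable_const.indicator hBm').comp measurable_snd)]
    simp only [lintegral_indicator hBm', lintegral_const, Measure.restrict_apply_univ]
    refine ENNReal.mul_ne_top (ENNReal.mul_ne_top ENNReal.ofReal_ne_top ?_) (measure_ne_top _ _)
    exact measure_closedBall_lt_top.ne
  -- scaled form
  have hscale : ∀ r, 0 < r → G r / ENNReal.ofReal (r ^ p) =
      ∫⁻ q, ENNReal.ofReal ((|f (q.2 + r • (q.1 : EuclideanSpace ℝ (Fin n))) - f q.2| / r) ^ p)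
        ∂(σ.prod volume) := by
    intro r hr
    rw [div_eq_mul_inv, hGdef, ← lintegral_mul_const _ (by fun_prop)]
    apply lintegral_congr
    intro q
    rw [← div_eq_mul_inv, ← ENNReal.ofReal_div_of_pos (by positivity),
      Real.div_rpow (by positivity) hr.le]
  have hbd : ∀ r, 0 < r → r ≤ 1 →
      ∀ q : Metric.sphere (0 : EuclideanSpace ℝ (Fin n)) 1 × EuclideanSpace ℝ (Fin n),
      ENNReal.ofReal ((|f (q.2 + r • (q.1 : EuclideanSpace ℝ (Fin n))) - f q.2| / r) ^ p) ≤ bd q := by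
    intro r hr hr1 q
    have hω : ‖(q.1 : EuclideanSpace ℝ (Fin n))‖ = 1 := by simp
    have hrω : ‖r • (q.1 : EuclideanSpace ℝ (Fin n))‖ = r := by
      rw [norm_smul, hω, mul_one, Real.norm_of_nonneg hr.le]
    by_cases hq : q.2 ∈ B'
    · simp only [bd, Set.indicator_of_mem hq]
      apply ENNReal.ofReal_le_ofReal
      apply Real.rpow_le_rpow (by positivity) _ hp0.le
      rw [div_le_iff₀ hr]
      have := hL.dist_le_mul (q.2 + r • (q.1 : EuclideanSpace ℝ (Fin n))) q.2
      rw [Real.dist_eq, dist_eq_norm, add_sub_cancel_left, hrω] at this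
      exact this
    · have hq' : R + 1 < ‖q.2‖ := by simpa [B'] using hq
      have h1 : f q.2 = 0 := hR _ (by linarith)
      have h2 : f (q.2 + r • (q.1 : EuclideanSpace ℝ (Fin n))) = 0 := by
        apply hR
        have := norm_sub_le (q.2 + r • (q.1 : EuclideanSpace ℝ (Fin n))) (r • (q.1 : EuclideanSpace ℝ (Fin n)))
        rw [add_sub_cancel_right, hrω] at this
        linarith
      rw [h1, h2]
      simp [Real.zero_rpow hp0.ne']
  have hlim : Tendsto (fun r => G r / ENNReal.ofReal (r ^ p)) (𝓝[>] 0) (𝓝 A) := by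
    have hAeq : A = ∫⁻ q, ENNReal.ofReal (|fderiv ℝ f q.2 (q.1 : EuclideanSpace ℝ (Fin n))| ^ p)
        ∂(σ.prod volume) := by
      rw [lintegral_prod_symm _ (by
        apply Measurable.aemeasurable
        have : Continuous (fun q : Metric.sphere (0 : EuclideanSpace ℝ (Fin n)) 1 × EuclideanSpace ℝ (Fin n) =>
          fderiv ℝ f q.2 (q.1 : EuclideanSpace ℝ (Fin n))) := by fun_prop
        have := this.measurable
        fun_prop)]
      simp only
      simp_rw [hσ, bbm_sphere hn hp0]
      rw [lintegral_const_mul _ (by have := hdc.norm.measurable; fun_prop), hAdef,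
        ofReal_integral_eq_lintegral_ofReal]
      · apply Continuous.integrable_of_hasCompactSupport
        · exact hdc.norm.rpow_const (fun _ => Or.inr hp0.le)
        · have := (hsupp.fderiv (𝕜 := ℝ)).norm
          exact this.comp_left (g := fun t : ℝ => t ^ p) (Real.zero_rpow hp0.ne')
      · exact Eventually.of_forall fun x => by simp only [Pi.zero_apply]; positivity
    rw [hAeq]
    have hpos : ∀ᶠ r : ℝ in 𝓝[>] 0, 0 < r := eventually_mem_nhdsWithin
    have hle1 : ∀ᶠ r : ℝ in 𝓝[>] 0, r ≤ 1 :=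
      (eventually_le_nhds (by norm_num)).filter_mono nhdsWithin_le_nhds
    apply Tendsto.congr' (f₁ := fun r => ∫⁻ q, ENNReal.ofReal
      ((|f (q.2 + r • (q.1 : EuclideanSpace ℝ (Fin n))) - f q.2| / r) ^ p) ∂(σ.prod volume))
    · filter_upwards [hpos] with r hr
      exact (hscale r hr).symm
    apply tendsto_lintegral_filter_of_dominated_convergence bd
    · refine Eventually.of_forall fun r => ?_
      fun_prop
    · filter_upwards [hpos, hle1] with r hr hr1
      exact Eventually.of_forall (hbd r hr hr1)
    · exact hC2
    · refine Eventually.of_forall fun q => ?_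
      apply ENNReal.tendsto_ofReal
      have hd : HasFDerivAt f (fderiv ℝ f q.2) q.2 :=
        (hf.differentiable (by simp) q.2).hasFDerivAt
      have h1 := (hd.hasLineDerivAt (q.1 : EuclideanSpace ℝ (Fin n))).tendsto_slope_zero_right
      have h2 := (h1.abs).rpow_const (p := p) (Or.inr hp0.le)
      refine h2.congr' ?_
      filter_upwards [hpos] with r hr
      rw [smul_eq_mul, abs_mul, abs_inv, abs_of_pos hr, div_eq_inv_mul]
  have hb1 : ∀ r, 0 < r → G r ≤ C1 := by
    intro r hr
    have hm2 : ∀ ω : Metric.sphere (0 : EuclideanSpace ℝ (Fin n)) 1,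
        ∫⁻ x, ENNReal.ofReal (|f (x + r • (ω : EuclideanSpace ℝ (Fin n))) - f x| ^ p) ≤
          ENNReal.ofReal ((2 * M) ^ p) * (volume B + volume B) := by
      intro ω
      have hpt : ∀ x, ENNReal.ofReal (|f (x + r • (ω : EuclideanSpace ℝ (Fin n))) - f x| ^ p) ≤
          ENNReal.ofReal ((2 * M) ^ p) * (B.indicator 1 (x + r • (ω : EuclideanSpace ℝ (Fin n))) + B.indicator 1 x) := by
        intro x
        by_cases h0 : f (x + r • (ω : EuclideanSpace ℝ (Fin n))) = 0 ∧ f x = 0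
        · rw [h0.1, h0.2]
          simp [Real.zero_rpow hp0.ne']
        · have h1 : (1 : ℝ≥0∞) ≤ B.indicator 1 (x + r • (ω : EuclideanSpace ℝ (Fin n))) + B.indicator 1 x := by
            rcases not_and_or.1 h0 with h | h
            · have : x + r • (ω : EuclideanSpace ℝ (Fin n)) ∈ B := by
                simp only [B, mem_closedBall_zero_iff]
                by_contra hc
                exact h (hR _ (not_le.1 hc))
              rw [Set.indicator_of_mem this]
              exact le_self_add
            · have : x ∈ B := by
                simp only [B, mem_closedBall_zero_iff]
                by_contra hc
                exact h (hR _ (not_le.1 hc))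
              rw [Set.indicator_of_mem this]
              exact le_add_self
          refine le_trans ?_ (le_mul_of_one_le_right' h1)
          apply ENNReal.ofReal_le_ofReal
          apply Real.rpow_le_rpow (by positivity) _ hp0.le
          have := hM x
          have := hM (x + r • (ω : EuclideanSpace ℝ (Fin n)))
          rw [Real.norm_eq_abs] at *
          have := abs_sub (f (x + r • (ω : EuclideanSpace ℝ (Fin n)))) (f x)
          linarith
      have hmi : Measurable (B.indicator (1 : EuclideanSpace ℝ (Fin n) → ℝ≥0∞)) :=
        measurable_one.indicator hBm
      calc _ ≤ _ := lintegral_mono hpt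
        _ = _ := by
          rw [lintegral_const_mul _ (by fun_prop), lintegral_add_right _ hmi,
            lintegral_add_right_eq_self (B.indicator 1), lintegral_indicator_one hBm]
    simp only [hGdef]
    rw [lintegral_prod _ (by apply Measurable.aemeasurable; fun_prop)]
    calc _ ≤ ∫⁻ ω, ENNReal.ofReal ((2 * M) ^ p) * (volume B + volume B) ∂σ := lintegral_mono hm2
      _ = C1 := by rw [lintegral_const]
  have hb2 : ∀ r, 0 < r → r ≤ 1 → G r / ENNReal.ofReal (r ^ p) ≤ C2 := by
    intro r hr hr1
    rw [hscale r hr]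
    exact lintegral_mono (hbd r hr hr1)
  have hfin := bbm_1d hp0 hGm (C := C1 + C2) (ENNReal.add_ne_top.2 ⟨hC1, hC2⟩) hA
    (fun r hr => (hb1 r hr).trans le_self_add) (fun r hr hr1 => (hb2 r hr hr1).trans le_add_self) hlim
  convert hfin using 2
  have hG1 : 0 < Real.Gamma (((n : ℝ) + p) / 2) := Real.Gamma_pos_of_pos (by linarith)
  have hG2 : 0 < Real.Gamma ((p + 1) / 2) := Real.Gamma_pos_of_pos (by linarith)
  have hK : 0 ≤ bbmK n p := by unfold bbmK; positivity
  rw [hAdef, ← ENNReal.ofReal_mul hK, ← ENNReal.ofReal_mul (by positivity)]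
  congr 1
  unfold bbmK
  field_simp
end
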